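/- Let (X_A, μ) be a topologically mixing Markov subshift of finite type satisfying the Doeblin condition, with the left shift T nonsingular with respect to μ. For every admissible configuration (B_k(i_k), B'_k(j_k))_{k≥1}, with D_k = log( P_{i_k}(B'_k) P_{j_k}(B_k) / ( P_{i_k}(B_k) P_{j_k}(B'_k) ) ), the set 𝓛(D_k : k ≥ 1) of partial limits of (D_k) is contained in the ratio set e(𝓡_A) of the renormalization pseudo full-group. In particular, if this partial limits set contains a positive-length interval, or contains two numbers that are linearly independent over the rationals, then e(𝓡_A) = ℝ. -/

import Mathlib

/-!
Exchanging the word `B_k` found at `i_k` and the word `B'_k` found at `j_k` multiplies the weight of every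
cylinder covering both positions by `exp (D k)`. Hence the exchange (`swapMap` on `swapDom`) has
constant logarithmic Radon–Nikodym derivative `D k`, and for each of the shifted measures, which
are Markov with shifted matrices, it has an analogous constant (`swapLog` of the shifted matrices).
By the chain rule the exchange belongs to the renormalization pseudo full-group as soon as these
constants tend to `0` along the shifts (`swapRenorm`).

This holds because consecutive transition matrices are asymptotically equal (`drift_tendsto`). The
compensated transition indicators `comp` are bounded and orthogonal in `L²(μ)`, so by Bessel's
inequality their means under any probability measure absolutely continuous with respect to `μ` tend
to `0`; under the shifted measure the mean at time `n` is `π (n + 1) s * (P (n + 1) s t - P n s t)`,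
and `π` is bounded below by the Doeblin condition and primitivity (`pi_lower`).

The same two conditions show that prescribing admissible blocks at distance at least `M` from a
window `[-N, N]` keeps a fixed proportion of every set depending on that window (`right_block`,
`left_block`). Approximating a Borel set by such window sets, one gets that every number
approximated by the logarithmic derivatives of far swaps of proportion bounded below (`FarValue`) is
an essential value (`FarValue.essential`). Partial limits of `D` are of this kind.

For the second part, the numbers satisfying `FarValue` form a closed subgroup of `ℝ`: swaps can be
inverted, and two of them placed at disjoint positions combined. A subgroup of `ℝ` is dense or
cyclic, and a cyclic one contains neither an interval nor two rationally independent numbers.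
-/


open MeasureTheory Filter Topology

namespace MarkovSFT

/-- The space of two-sided sequences over `S`. -/
abbrev Seq (S : Type*) := ℤ → S

/-- The shift by `n`: `(T^n x)_k = x_{k+n}`. -/
def shiftZ {S : Type*} (n : ℤ) (x : Seq S) : Seq S := fun k => x (k + n)

/-- The left shift `T`. -/
def shiftMap {S : Type*} : Seq S → Seq S := shiftZ 1

/-- The subshift of finite type determined by the adjacency matrix `A`. -/
def SFT {S : Type*} (A : S → S → Bool) : Set (Seq S) :=
  {x | ∀ n : ℤ, A (x n) (x (n + 1)) = true}

/-- `A` is primitive: all entries of `A^M` are positive for some `M ≥ 1`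
(expressed via the existence of admissible paths of length `M`). -/
def IsPrimitive {S : Type*} (A : S → S → Bool) : Prop :=
  ∃ M : ℕ, 1 ≤ M ∧ ∀ s t : S, ∃ u : ℕ → S,
    u 0 = s ∧ u M = t ∧ ∀ i < M, A (u i) (u (i + 1)) = true

/-- A stochastic matrix over the finite state space `S`. -/
def IsStochastic {S : Type*} [Fintype S] (P : S → S → ℝ) : Prop :=
  (∀ s t, 0 ≤ P s t) ∧ ∀ s, ∑ t, P s t = 1

/-- The Doeblin condition for the family of transition matrices `P` relative to `A`. -/
def Doeblin {S : Type*} (A : S → S → Bool) (P : ℤ → S → S → ℝ) : Prop :=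
  ∃ δ : ℝ, 0 < δ ∧ ∀ (n : ℤ) (s t : S), δ ≤ P n s t ↔ A s t = true

/-- `μ` is the Markov measure on the SFT `X_A` determined by the transition
matrices `(P n)` and coordinate distributions `(π n)`. -/
structure IsMarkovMeasure {S : Type*} [Fintype S] [MeasurableSpace S]
    (μ : Measure (Seq S)) (A : S → S → Bool)
    (P : ℤ → S → S → ℝ) (π : ℤ → S → ℝ) : Prop where
  isProb : IsProbabilityMeasure μ
  stochastic : ∀ n, IsStochastic (P n)
  compat : ∀ (n : ℤ) (s t : S), A s t = false → P n s t = 0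
  dist_nonneg : ∀ (n : ℤ) (s : S), 0 ≤ π n s
  dist_sum : ∀ n : ℤ, ∑ s, π n s = 1
  consistent : ∀ (n : ℤ) (t : S), ∑ s, π n s * P n s t = π (n + 1) t
  supp : μ (SFT A) = 1
  cylinder : ∀ (k : ℤ) (m : ℕ) (w : Fin (m + 1) → S),
    μ {x | ∀ i : Fin (m + 1), x (k + 1 + ((i : ℕ) : ℤ)) = w i}
      = ENNReal.ofReal (π (k + 1) (w 0) *
          ∏ i : Fin m, P (k + 1 + ((i : ℕ) : ℤ)) (w i.castSucc) (w i.succ))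

/-- The left shift is nonsingular with respect to `μ`:
`μ` and `μ ∘ T⁻¹` are mutually absolutely continuous. -/
def ShiftNonsingular {S : Type*} [Fintype S] [MeasurableSpace S]
    (μ : Measure (Seq S)) : Prop :=
  Measure.map (shiftMap (S := S)) μ ≪ μ ∧ μ ≪ Measure.map (shiftMap (S := S)) μ

/-- The left shift is conservative with respect to `μ`. -/
def ShiftConservative {S : Type*} [Fintype S] [MeasurableSpace S]
    (μ : Measure (Seq S)) : Prop :=
  ∀ E : Set (Seq S), MeasurableSet E → 0 < μ E →
    ∃ n : ℕ, 1 ≤ n ∧ 0 < μ (E ∩ (shiftMap (S := S))^[n] ⁻¹' E)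

/-- An element of the pseudo full-group `[[T]]` of the shift, together with
(a version of) the logarithm of its Radon–Nikodym derivative `log dμ∘V/dμ`. -/
structure PFG {S : Type*} [Fintype S] [MeasurableSpace S] (μ : Measure (Seq S)) where
  dom : Set (Seq S)
  toFun : Seq S → Seq S
  logDeriv : Seq S → ℝ
  meas_dom : MeasurableSet dom
  meas_toFun : Measurable toFun
  meas_logDeriv : Measurable logDeriv
  injOn : Set.InjOn toFun dom
  orbit : ∀ᵐ x ∂μ.restrict dom, ∃ n : ℤ, toFun x = shiftZ n x
  deriv_spec : ∀ E : Set (Seq S), E ⊆ dom → MeasurableSet E →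
    μ (toFun '' E) = ∫⁻ x in E, ENNReal.ofReal (Real.exp (logDeriv x)) ∂μ

/-- `r` is an essential value of (the Radon–Nikodym cocycle of) the shift on `(X, μ)`. -/
def IsEssentialValue {S : Type*} [Fintype S] [MeasurableSpace S]
    (μ : Measure (Seq S)) (r : ℝ) : Prop :=
  ∀ E : Set (Seq S), MeasurableSet E → 0 < μ E → ∀ ε : ℝ, 0 < ε →
    ∃ g : PFG μ,
      0 < μ (E ∩ g.dom ∩ g.toFun ⁻¹' E ∩ {x | |g.logDeriv x - r| < ε})

end MarkovSFT
namespace MarkovSFT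

/-- The weight `P_i(B) = P_i(b_1,b_2) ⋯ P_{i+ℓ-2}(b_{ℓ-1},b_ℓ)` of the block `B`
(of length `ℓ`, indexed from `0`) placed at coordinate `i`. -/
noncomputable def wordP {S : Type*} (P : ℤ → S → S → ℝ) (i : ℤ)
    (B : ℕ → S) (ℓ : ℕ) : ℝ :=
  ∏ l ∈ Finset.range (ℓ - 1), P (i + (l : ℤ)) (B l) (B (l + 1))

/-- An element of the renormalization pseudo full-group `[[𝓡_A]]`: a nonsingular
measurable injection `V : dom → X_A`, moving a.e. point within its
finite-coordinate-change class, with log Radon–Nikodym derivative `logDeriv`,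
such that a.e. on `dom` the ratio `(d(μ∘Tⁿ∘V)/dμ)(x) / (d(μ∘Tⁿ)/dμ)(x)`
(computed via the chain rule) tends to `1` as `|n| → ∞`. -/
structure RenormPFG {S : Type*} [Fintype S] [MeasurableSpace S]
    (μ : Measure (Seq S)) where
  dom : Set (Seq S)
  toFun : Seq S → Seq S
  logDeriv : Seq S → ℝ
  meas_dom : MeasurableSet dom
  meas_toFun : Measurable toFun
  meas_logDeriv : Measurable logDeriv
  injOn : Set.InjOn toFun dom
  finite_diff : ∀ᵐ x ∂μ.restrict dom, {k : ℤ | toFun x k ≠ x k}.Finite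
  deriv_spec : ∀ E : Set (Seq S), E ⊆ dom → MeasurableSet E →
    μ (toFun '' E) = ∫⁻ x in E, ENNReal.ofReal (Real.exp (logDeriv x)) ∂μ
  renorm : ∀ᵐ x ∂μ.restrict dom,
    Tendsto (fun n : ℤ =>
        Measure.rnDeriv (Measure.map (shiftZ (-n)) μ) μ (toFun x)
            * ENNReal.ofReal (Real.exp (logDeriv x))
          / Measure.rnDeriv (Measure.map (shiftZ (-n)) μ) μ x)
      cofinite (𝓝 (1 : ENNReal))

/-- `r` is an essential value of the Radon–Nikodym cocycle of the
renormalization pseudo full-group `𝓡_A`. -/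
def IsEssentialValueRenorm {S : Type*} [Fintype S] [MeasurableSpace S]
    (μ : Measure (Seq S)) (r : ℝ) : Prop :=
  ∀ E : Set (Seq S), MeasurableSet E → 0 < μ E → ∀ ε : ℝ, 0 < ε →
    ∃ g : RenormPFG μ,
      0 < μ (E ∩ g.dom ∩ g.toFun ⁻¹' E ∩ {x | |g.logDeriv x - r| < ε})

end MarkovSFT
namespace MarkovSFT

/-- The set of partial limits (limit points) of a sequence. -/
def limitSet {α : Type*} [TopologicalSpace α] (v : ℕ → α) : Set α :=
  {a | ∃ φ : ℕ → ℕ, StrictMono φ ∧ Tendsto (v ∘ φ) atTop (𝓝 a)}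

set_option linter.unusedSectionVars false

/-! ### Cylinders and window sets -/

section Cylinders

variable {S : Type*} [Fintype S] [MeasurableSpace S] [MeasurableSingletonClass S]

/-- The cylinder of all sequences agreeing with `x` on the window `[a, b]`. -/
def cyl (a b : ℤ) (x : Seq S) : Set (Seq S) := {y | ∀ k, a ≤ k → k ≤ b → y k = x k}

/-- The Markov weight of the word that `x` carries on the window `[a, b]`. -/
noncomputable def wt (P : ℤ → S → S → ℝ) (π : ℤ → S → ℝ) (a b : ℤ) (x : Seq S) : ℝ :=
  π a (x a) * ∏ k ∈ Finset.Ico a b, P k (x k) (x (k + 1))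

/-- The part of the Markov property used throughout: `μ` is a probability measure whose cylinder
probabilities are given by `P` and `π`. Unlike `IsMarkovMeasure`, it ignores the subshift, and
points of a cylinder are represented by full sequences. -/
structure HasCyl (μ : Measure (Seq S)) (P : ℤ → S → S → ℝ) (π : ℤ → S → ℝ) : Prop where
  prob : IsProbabilityMeasure μ
  nonneg : ∀ k s t, 0 ≤ P k s t
  pi_nonneg : ∀ k s, 0 ≤ π k s
  cyl_eq : ∀ a b, a ≤ b → ∀ x, μ (cyl a b x) = ENNReal.ofReal (wt P π a b x)

/-- `F` depends only on the coordinates in the window `[a, b]`. -/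
def Det (a b : ℤ) (F : Set (Seq S)) : Prop :=
  ∀ x y : Seq S, (∀ k, a ≤ k → k ≤ b → x k = y k) → (x ∈ F ↔ y ∈ F)

lemma Det.mono {a b a' b' : ℤ} {F : Set (Seq S)} (h : Det a b F) (ha : a' ≤ a) (hb : b ≤ b') :
    Det a' b' F :=
  fun x y hxy => h x y fun k h1 h2 => hxy k (ha.trans h1) (h2.trans hb)

lemma measurable_cyl (a b : ℤ) (x : Seq S) : MeasurableSet (cyl a b x) := by
  have : cyl a b x = ⋂ k ∈ Set.Icc a b, {y : Seq S | y k = x k} := by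
    ext y; simp [cyl]
  rw [this]
  exact MeasurableSet.biInter (Set.to_countable _)
    fun k _ => (measurable_pi_apply k : Measurable fun y : Seq S => y k)
      (measurableSet_singleton (x k))

/-- Restriction of a sequence to the window `[a, b]`. -/
def win (a b : ℤ) (x : Seq S) : Finset.Icc a b → S := fun k => x k

lemma win_preimage (a b : ℤ) (x : Seq S) : win a b ⁻¹' {win a b x} = cyl a b x := by
  ext y
  simp only [win, Set.mem_preimage, Set.mem_singleton_iff, cyl, Set.mem_ofPred_eq, funext_iff,
    Subtype.forall, Finset.mem_Icc, and_imp]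

lemma win_fiber (a b : ℤ) (w : Finset.Icc a b → S) :
    win a b ⁻¹' {w} = ∅ ∨ ∃ x, win a b x = w ∧ win a b ⁻¹' {w} = cyl a b x := by
  by_cases h : ∃ x, win a b x = w
  · obtain ⟨x, rfl⟩ := h
    exact Or.inr ⟨x, rfl, win_preimage a b x⟩
  · left
    ext y
    simp only [Set.mem_preimage, Set.mem_singleton_iff, Set.mem_empty_iff_false, iff_false]
    exact fun hy => h ⟨y, hy⟩

/-- Window sets are finite disjoint unions of cylinders, so measures can be compared on them
cylinder by cylinder. -/
lemma det_le {a b : ℤ} {F : Set (Seq S)} (hF : Det a b F) (ν₁ ν₂ : Measure (Seq S))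
    (h : ∀ x ∈ F, ν₁ (cyl a b x) ≤ ν₂ (cyl a b x)) : ν₁ F ≤ ν₂ F := by
  classical
  have hFe : F = win a b ⁻¹' ((Finset.univ.filter fun w => ∃ x ∈ F, win a b x = w : Finset _) :
      Set (Finset.Icc a b → S)) := by
    ext y
    simp only [Set.mem_preimage, Finset.coe_filter, Finset.mem_univ, true_and, Set.mem_ofPred_eq]
    refine ⟨fun hy => ⟨y, hy, rfl⟩, ?_⟩
    rintro ⟨x, hx, hxy⟩
    refine (hF x y fun k h1 h2 => ?_).1 hx
    exact congrFun hxy ⟨k, Finset.mem_Icc.2 ⟨h1, h2⟩⟩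
  have hm : ∀ w : Finset.Icc a b → S, MeasurableSet (win a b ⁻¹' {w}) := by
    intro w
    rcases win_fiber a b w with h | ⟨x, -, h⟩ <;> rw [h]
    · exact MeasurableSet.empty
    · exact measurable_cyl a b x
  rw [hFe, ← sum_measure_preimage_singleton _ fun w _ => hm w,
    ← sum_measure_preimage_singleton _ fun w _ => hm w]
  refine Finset.sum_le_sum fun w hw => ?_
  obtain ⟨x, hx, rfl⟩ := (Finset.mem_filter.1 hw).2
  rw [win_preimage]
  exact h x hx

lemma exists_det_of_cylinder {t : Set (Seq S)} (ht : t ∈ measurableCylinders fun _ : ℤ => S) :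
    ∃ N : ℕ, ∀ n : ℕ, N ≤ n → Det (-(n : ℤ)) n t := by
  obtain ⟨s, T, -, rfl⟩ := (mem_measurableCylinders t).1 ht
  refine ⟨∑ k ∈ s, k.natAbs, fun n hn x y hxy => ?_⟩
  have : s.restrict x = s.restrict y := by
    ext ⟨k, hk⟩
    have h1 : k.natAbs ≤ ∑ k ∈ s, k.natAbs :=
      Finset.single_le_sum (f := fun k : ℤ => k.natAbs) (fun _ _ => Nat.zero_le _) hk
    exact hxy k (by omega) (by omega)
  simp only [mem_cylinder, this]

lemma ext_cyl (ν₁ ν₂ : Measure (Seq S)) [IsFiniteMeasure ν₁] (N : ℕ)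
    (h : ∀ n : ℕ, N ≤ n → ∀ x, ν₁ (cyl (-(n : ℤ)) n x) = ν₂ (cyl (-(n : ℤ)) n x)) :
    ν₁ = ν₂ := by
  have key : ∀ t ∈ measurableCylinders (fun _ : ℤ => S), ν₁ t = ν₂ t := by
    intro t ht
    obtain ⟨N', hN'⟩ := exists_det_of_cylinder ht
    have hd := hN' (max N N') (le_max_right _ _)
    exact le_antisymm (det_le hd _ _ fun x _ => (h _ (le_max_left _ _) x).le)
      (det_le hd _ _ fun x _ => (h _ (le_max_left _ _) x).ge)
  exact ext_of_generate_finite (measurableCylinders fun _ : ℤ => S)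
    generateFrom_measurableCylinders.symm isPiSystem_measurableCylinders key
    (key _ (univ_mem_measurableCylinders _))

/-- Every Borel set is approximated in measure by sets depending on a finite window. -/
lemma exists_det_approx (μ : Measure (Seq S)) [IsFiniteMeasure μ] {E : Set (Seq S)}
    (hE : MeasurableSet E) {η : ℝ} (hη : 0 < η) :
    ∃ (N : ℕ) (F : Set (Seq S)), Det (-(N : ℤ)) N F ∧ MeasurableSet F ∧
      μ (symmDiff E F) < ENNReal.ofReal η := by
  have hdense := Measure.MeasureDense.of_generateFrom_isSetAlgebra_finite (μ := μ)
    (isSetAlgebra_measurableCylinders (α := fun _ : ℤ => S))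
    generateFrom_measurableCylinders.symm
  obtain ⟨F, hF, h⟩ := hdense.approx E hE (measure_ne_top μ E) η hη
  obtain ⟨N, hN⟩ := exists_det_of_cylinder hF
  exact ⟨N, F, hN N le_rfl, MeasurableSet.of_mem_measurableCylinders hF, h⟩

lemma HasCyl.of_markov {μ : Measure (Seq S)} {A : S → S → Bool} {P : ℤ → S → S → ℝ}
    {π : ℤ → S → ℝ} (h : IsMarkovMeasure μ A P π) : HasCyl μ P π where
  prob := h.isProb
  nonneg k s t := (h.stochastic k).1 s t
  pi_nonneg := h.dist_nonneg
  cyl_eq a b hab x := by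
    obtain ⟨m, rfl⟩ : ∃ m : ℕ, b = a + m := ⟨(b - a).toNat, by omega⟩
    have h1 := h.cylinder (a - 1) m (fun i => x (a + (i : ℕ)))
    simp only [sub_add_cancel] at h1
    have h2 : {y : Seq S | ∀ i : Fin (m + 1), y (a + ((i : ℕ) : ℤ)) = x (a + ((i : ℕ) : ℤ))}
        = cyl a (a + m) x := by
      ext y
      simp only [cyl, Set.mem_ofPred_eq]
      constructor
      · intro hy k hk1 hk2
        have := hy ⟨(k - a).toNat, by omega⟩
        have e : a + (((k - a).toNat : ℕ) : ℤ) = k := by omega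
        simpa only [e] using this
      · intro hy i
        exact hy _ (by omega) (by have := i.2; omega)
    rw [h2] at h1
    rw [h1, wt]
    congr 2
    · simp
    · simp only [Fin.val_castSucc, Fin.val_succ]
      rw [Fin.prod_univ_eq_prod_range
        (fun i : ℕ => P (a + i) (x (a + (i : ℤ))) (x (a + ((i + 1 : ℕ) : ℤ)))) m]
      refine Finset.prod_bij (fun i _ => a + (i : ℤ)) ?_ ?_ ?_ ?_
      · intro i hi; simp at hi ⊢; exact hi
      · intro i _ j _ hij; omega
      · intro k hk
        rw [Finset.mem_Ico] at hk
        exact ⟨(k - a).toNat, by rw [Finset.mem_range]; omega, by omega⟩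
      · intro i _
        simp [add_assoc]

lemma measurable_shiftZ (n : ℤ) : Measurable (shiftZ (S := S) n) :=
  measurable_pi_iff.2 fun k => measurable_pi_apply (k + n)

lemma HasCyl.shift {μ : Measure (Seq S)} {P : ℤ → S → S → ℝ} {π : ℤ → S → ℝ}
    (h : HasCyl μ P π) (n : ℤ) :
    HasCyl (Measure.map (shiftZ n) μ) (fun k => P (k + n)) (fun k => π (k + n)) where
  prob := by
    have := h.prob
    exact Measure.isProbabilityMeasure_map (measurable_shiftZ n).aemeasurable
  nonneg k := h.nonneg _
  pi_nonneg k := h.pi_nonneg _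
  cyl_eq a b hab x := by
    rw [Measure.map_apply (measurable_shiftZ n) (measurable_cyl a b x)]
    have h1 : shiftZ n ⁻¹' cyl a b x = cyl (a + n) (b + n) (shiftZ (-n) x) := by
      ext y
      simp only [cyl, shiftZ, Set.mem_preimage, Set.mem_ofPred_eq]
      constructor
      · intro hy k h1 h2
        have := hy (k + -n) (by omega) (by omega)
        simpa using this
      · intro hy k h1 h2
        simpa using hy (k + n) (by omega) (by omega)
    rw [h1, h.cyl_eq _ _ (by omega)]
    congr 1
    unfold wt shiftZ
    congr 1
    · simp
    · symm
      refine Finset.prod_bij (fun i _ => i + n) ?_ ?_ ?_ ?_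
      · intro i hi; simpa using hi
      · intro i _ j _ hij; omega
      · intro k hk
        rw [Finset.mem_Ico] at hk
        exact ⟨k - n, by rw [Finset.mem_Ico]; omega, by omega⟩
      · intro i _
        congr 1 <;> congr 1 <;> ring

end Cylinders

/-! ### Swaps and their Radon–Nikodym derivatives -/

section Swaps

variable {S : Type*} [Fintype S] [MeasurableSpace S] [MeasurableSingletonClass S]

/-- Rewrite the coordinates at which `u` and `v` differ to their values in `v`. -/
noncomputable def swapMap (u v : Seq S) (x : Seq S) : Seq S := by
  classical exact fun k => if u k = v k then x k else v k

/-- The sequences agreeing with `u` on both ends of every edge `(k, k + 1)`, `k ∈ W`. -/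
def swapDom (W : Finset ℤ) (u : Seq S) : Set (Seq S) :=
  {x | ∀ k ∈ W, x k = u k ∧ x (k + 1) = u (k + 1)}

/-- The logarithmic change of weight when `u` is replaced by `v` along the edges in `W`. -/
noncomputable def swapLog (P : ℤ → S → S → ℝ) (W : Finset ℤ) (u v : Seq S) : ℝ :=
  ∑ k ∈ W, (Real.log (P k (v k) (v (k + 1))) - Real.log (P k (u k) (u (k + 1))))

/-- `u` and `v` differ only at coordinates both of whose adjacent edges lie in `W`. -/
def Inner (W : Finset ℤ) (u v : Seq S) : Prop := ∀ k, u k ≠ v k → k ∈ W ∧ k - 1 ∈ W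

lemma Inner.symm {W : Finset ℤ} {u v : Seq S} (h : Inner W u v) : Inner W v u :=
  fun k hk => h k hk.symm

lemma swapLog_symm (P : ℤ → S → S → ℝ) (W : Finset ℤ) (u v : Seq S) :
    swapLog P W v u = -swapLog P W u v := by
  simp [swapLog]

lemma measurable_swapMap (u v : Seq S) : Measurable (swapMap u v) := by
  refine measurable_pi_iff.2 fun k => ?_
  by_cases h : u k = v k
  · simpa [swapMap, h] using measurable_pi_apply k
  · simp [swapMap, h]

lemma measurable_swapDom (W : Finset ℤ) (u : Seq S) : MeasurableSet (swapDom W u) := by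
  have : swapDom W u =
      ⋂ k ∈ W, ({y : Seq S | y k = u k} ∩ {y : Seq S | y (k + 1) = u (k + 1)}) := by
    ext y; simp [swapDom]
  rw [this]
  have h : ∀ k : ℤ, MeasurableSet {y : Seq S | y k = u k} := fun k =>
    (measurable_pi_apply k : Measurable fun y : Seq S => y k) (measurableSet_singleton (u k))
  exact Finset.measurableSet_biInter _ fun k _ => (h k).inter (h (k + 1))

lemma swapMap_mem {W : Finset ℤ} {u : Seq S} (v : Seq S) {x : Seq S} (hx : x ∈ swapDom W u) :
    swapMap u v x ∈ swapDom W v := by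
  intro k hk
  have := hx k hk
  constructor
  · by_cases h : u k = v k
    · simp [swapMap, h, this.1]
    · simp [swapMap, h]
  · by_cases h : u (k + 1) = v (k + 1)
    · simp [swapMap, h, this.2]
    · simp [swapMap, h]

lemma swapMap_swapMap {W : Finset ℤ} {u v : Seq S} (h : Inner W u v) {x : Seq S}
    (hx : x ∈ swapDom W u) : swapMap v u (swapMap u v x) = x := by
  ext k
  by_cases hk : u k = v k
  · simp [swapMap, hk]
  · have := (hx k (h k hk).1).1
    have hk' : ¬ v k = u k := fun h => hk h.symm
    simp [swapMap, hk', this]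

lemma swapMap_image {W : Finset ℤ} {u v : Seq S} (h : Inner W u v) {E : Set (Seq S)}
    (hE : E ⊆ swapDom W u) : swapMap u v '' E = swapMap v u ⁻¹' E ∩ swapDom W v := by
  ext y
  constructor
  · rintro ⟨x, hx, rfl⟩
    refine ⟨?_, swapMap_mem v (hE hx)⟩
    rw [Set.mem_preimage, swapMap_swapMap h (hE hx)]
    exact hx
  · rintro ⟨h1, h2⟩
    exact ⟨_, h1, swapMap_swapMap h.symm h2⟩

/-- Swapping multiplies the weight of every large cylinder by the same constant. -/
lemma wt_swapMap {P : ℤ → S → S → ℝ} (π : ℤ → S → ℝ) {W : Finset ℤ} {u v : Seq S}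
    (h : Inner W u v) (hu : ∀ k ∈ W, 0 < P k (u k) (u (k + 1)))
    (hv : ∀ k ∈ W, 0 < P k (v k) (v (k + 1))) {a b : ℤ} (hW : W ⊆ Finset.Ico a b) {x : Seq S}
    (hx : x ∈ swapDom W u) :
    wt P π a b (swapMap u v x) = Real.exp (swapLog P W u v) * wt P π a b x := by
  classical
  have h1 : swapMap u v x a = x a := by
    by_cases hk : u a = v a
    · simp [swapMap, hk]
    · have := Finset.mem_Ico.1 (hW (h a hk).2)
      omega
  have h2 : ∀ k ∈ Finset.Ico a b, P k (swapMap u v x k) (swapMap u v x (k + 1)) =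
      (if k ∈ W then Real.exp (Real.log (P k (v k) (v (k + 1))) -
        Real.log (P k (u k) (u (k + 1)))) else 1) * P k (x k) (x (k + 1)) := by
    intro k _
    split_ifs with hk
    · have e1 := swapMap_mem v hx k hk
      have e2 := hx k hk
      rw [e1.1, e1.2, e2.1, e2.2, Real.exp_sub, Real.exp_log (hu k hk), Real.exp_log (hv k hk)]
      have := (hu k hk).ne'
      field_simp
    · have e1 : u k = v k := by
        by_contra hne; exact hk (h k hne).1
      have e2 : u (k + 1) = v (k + 1) := by
        by_contra hne; exact hk (by simpa using (h (k + 1) hne).2)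
      simp [swapMap, e1, e2]
  unfold wt
  rw [h1, Finset.prod_congr rfl h2, Finset.prod_mul_distrib, Finset.prod_ite_mem,
    Finset.inter_eq_right.2 hW, swapLog, Real.exp_sum]
  ring

lemma map_swapMap {μ : Measure (Seq S)} {P : ℤ → S → S → ℝ} {π : ℤ → S → ℝ} (hμ : HasCyl μ P π)
    {W : Finset ℤ} {u v : Seq S} (h : Inner W u v) (hu : ∀ k ∈ W, 0 < P k (u k) (u (k + 1)))
    (hv : ∀ k ∈ W, 0 < P k (v k) (v (k + 1))) :
    Measure.map (swapMap u v) (μ.restrict (swapDom W u)) =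
      ENNReal.ofReal (Real.exp (-swapLog P W u v)) • μ.restrict (swapDom W v) := by
  have := hμ.prob
  refine ext_cyl _ _ (∑ k ∈ W, k.natAbs + 1) fun n hn y => ?_
  have hW : W ⊆ Finset.Ico (-(n : ℤ)) n := by
    intro k hk
    have h1 : k.natAbs ≤ ∑ k ∈ W, k.natAbs :=
      Finset.single_le_sum (f := fun k : ℤ => k.natAbs) (fun _ _ => Nat.zero_le _) hk
    rw [Finset.mem_Ico]
    omega
  rw [Measure.map_apply (measurable_swapMap u v) (measurable_cyl _ _ _),
    Measure.restrict_apply (measurable_swapMap u v (measurable_cyl _ _ _)),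
    Measure.smul_apply, Measure.restrict_apply (measurable_cyl _ _ _)]
  -- membership in the domain only depends on the window
  have hloc : ∀ (w : Seq S) (y z : Seq S), z ∈ cyl (-(n : ℤ)) n y → z ∈ swapDom W w →
      y ∈ swapDom W w := by
    intro w y z hz hzw k hk
    have hk' := Finset.mem_Ico.1 (hW hk)
    rw [← hz k (by omega) (by omega), ← hz (k + 1) (by omega) (by omega)]
    exact hzw k hk
  by_cases hy : y ∈ swapDom W v
  · have e1 : cyl (-(n : ℤ)) n y ∩ swapDom W v = cyl (-(n : ℤ)) n y := by
      refine Set.inter_eq_left.2 fun z hz => ?_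
      exact hloc v z y (fun k h1 h2 => (hz k h1 h2).symm) hy
    have e2 : swapMap u v ⁻¹' cyl (-(n : ℤ)) n y ∩ swapDom W u
        = cyl (-(n : ℤ)) n (swapMap v u y) := by
      ext z
      constructor
      · rintro ⟨h1, h2⟩ k hk1 hk2
        have := h1 k hk1 hk2
        by_cases hk : u k = v k
        · simpa [swapMap, hk] using this
        · have hk' : ¬ v k = u k := fun h => hk h.symm
          simp [swapMap, hk', (h2 k (h k hk).1).1]
      · intro hz
        refine ⟨fun k hk1 hk2 => ?_,
          hloc u z _ (fun k h1 h2 => (hz k h1 h2).symm) (swapMap_mem u hy)⟩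
        have := hz k hk1 hk2
        by_cases hk : u k = v k
        · simpa [swapMap, hk] using this
        · simp [swapMap, hk, (hy k (h k hk).1).1]
    rw [e1, e2, hμ.cyl_eq _ _ (by omega), hμ.cyl_eq _ _ (by omega),
      wt_swapMap π h.symm hv hu hW hy, swapLog_symm, ENNReal.ofReal_mul (Real.exp_pos _).le,
      smul_eq_mul]
  · have e1 : cyl (-(n : ℤ)) n y ∩ swapDom W v = ∅ := by
      ext z
      simp only [Set.mem_inter_iff, Set.mem_empty_iff_false, iff_false]
      exact fun hz => hy (hloc v y z hz.1 hz.2)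
    have e2 : swapMap u v ⁻¹' cyl (-(n : ℤ)) n y ∩ swapDom W u = ∅ := by
      ext z
      simp only [Set.mem_inter_iff, Set.mem_empty_iff_false, iff_false]
      exact fun hz => hy (hloc v y _ hz.1 (swapMap_mem v hz.2))
    rw [e1, e2]
    simp

lemma measure_swapMap_preimage {μ : Measure (Seq S)} {P : ℤ → S → S → ℝ} {π : ℤ → S → ℝ}
    (hμ : HasCyl μ P π)
    {W : Finset ℤ} {u v : Seq S} (h : Inner W u v) (hu : ∀ k ∈ W, 0 < P k (u k) (u (k + 1)))
    (hv : ∀ k ∈ W, 0 < P k (v k) (v (k + 1))) {E : Set (Seq S)} (hE : MeasurableSet E) :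
    μ (swapMap u v ⁻¹' E ∩ swapDom W u) =
      ENNReal.ofReal (Real.exp (-swapLog P W u v)) * μ (E ∩ swapDom W v) := by
  have := congrArg (fun ν : Measure (Seq S) => ν E) (map_swapMap hμ h hu hv)
  simpa [Measure.map_apply (measurable_swapMap u v) hE,
    Measure.restrict_apply (measurable_swapMap u v hE), Measure.restrict_apply hE] using this

lemma measure_swapMap_image {μ : Measure (Seq S)} {P : ℤ → S → S → ℝ} {π : ℤ → S → ℝ}
    (hμ : HasCyl μ P π)
    {W : Finset ℤ} {u v : Seq S} (h : Inner W u v) (hu : ∀ k ∈ W, 0 < P k (u k) (u (k + 1)))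
    (hv : ∀ k ∈ W, 0 < P k (v k) (v (k + 1))) {E : Set (Seq S)} (hE : MeasurableSet E)
    (hEd : E ⊆ swapDom W u) :
    μ (swapMap u v '' E) = ENNReal.ofReal (Real.exp (swapLog P W u v)) * μ E := by
  rw [swapMap_image h hEd, measure_swapMap_preimage hμ h.symm hv hu hE, swapLog_symm, neg_neg,
    Set.inter_eq_left.2 hEd]

/-- For two equivalent Markov measures, the swap changes their Radon–Nikodym derivative by the
quotient of the two constants by which it changes each measure. -/
lemma rnDeriv_swapMap {μ ν : Measure (Seq S)} {P P' : ℤ → S → S → ℝ} {π π' : ℤ → S → ℝ}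
    (hμ : HasCyl μ P π) (hν : HasCyl ν P' π') (hμν : μ ≪ ν) (hνμ : ν ≪ μ)
    {W : Finset ℤ} {u v : Seq S} (h : Inner W u v) (hu : ∀ k ∈ W, 0 < P k (u k) (u (k + 1)))
    (hv : ∀ k ∈ W, 0 < P k (v k) (v (k + 1))) (hu' : ∀ k ∈ W, 0 < P' k (u k) (u (k + 1)))
    (hv' : ∀ k ∈ W, 0 < P' k (v k) (v (k + 1))) :
    ∀ᵐ x ∂μ.restrict (swapDom W u),
      ν.rnDeriv μ (swapMap u v x) * ENNReal.ofReal (Real.exp (swapLog P W u v)) / ν.rnDeriv μ x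
        = ENNReal.ofReal (Real.exp (swapLog P' W u v)) := by
  have := hμ.prob
  have := hν.prob
  have hae : (fun x => ν.rnDeriv μ (swapMap u v x) *
        ENNReal.ofReal (Real.exp (swapLog P W u v))) =ᵐ[μ.restrict (swapDom W u)]
      fun x => ENNReal.ofReal (Real.exp (swapLog P' W u v)) * ν.rnDeriv μ x := by
    refine ae_eq_of_forall_setLIntegral_eq_of_sigmaFinite
      (((Measure.measurable_rnDeriv ν μ).comp (measurable_swapMap u v)).mul_const _)
      ((Measure.measurable_rnDeriv ν μ).const_mul _) fun s hs _ => ?_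
    have hm := measurable_swapDom W u
    have hcomp : Measurable fun x => ν.rnDeriv μ (swapMap u v x) :=
      (Measure.measurable_rnDeriv ν μ).comp (measurable_swapMap u v)
    have hE : MeasurableSet (s ∩ swapDom W u) := hs.inter hm
    have hEd : s ∩ swapDom W u ⊆ swapDom W u := Set.inter_subset_right
    have hVE : MeasurableSet (swapMap u v '' (s ∩ swapDom W u)) := by
      rw [swapMap_image h hEd]
      exact (measurable_swapMap v u hE).inter (measurable_swapDom W v)
    have hpre : swapMap u v ⁻¹' (swapMap u v '' (s ∩ swapDom W u)) ∩ swapDom W u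
        = s ∩ swapDom W u := by
      ext x
      constructor
      · rintro ⟨⟨y, hy, hyx⟩, hx⟩
        have := congrArg (swapMap v u) hyx
        rw [swapMap_swapMap h hy.2, swapMap_swapMap h hx] at this
        exact this ▸ hy
      · exact fun hx => ⟨⟨x, hx, rfl⟩, hx.2⟩
    have hsub : swapMap u v '' (s ∩ swapDom W u) ⊆ swapDom W v := by
      rintro _ ⟨x, hx, rfl⟩
      exact swapMap_mem v hx.2
    rw [Measure.restrict_restrict hs,
      lintegral_mul_const _ hcomp,
      lintegral_const_mul _ (Measure.measurable_rnDeriv ν μ),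
      Measure.setLIntegral_rnDeriv hνμ, ← measure_swapMap_image hν h hu' hv' hE hEd]
    have key : ∫⁻ x in s ∩ swapDom W u, ν.rnDeriv μ (swapMap u v x) ∂μ =
        ENNReal.ofReal (Real.exp (-swapLog P W u v)) * ν (swapMap u v '' (s ∩ swapDom W u)) := by
      conv_lhs => rw [← hpre, ← Measure.restrict_restrict (measurable_swapMap u v hVE)]
      rw [← setLIntegral_map hVE (Measure.measurable_rnDeriv ν μ) (measurable_swapMap u v),
        map_swapMap hμ h hu hv, Measure.restrict_smul, lintegral_smul_measure,
        Measure.restrict_restrict hVE, Set.inter_eq_left.2 hsub,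
        Measure.setLIntegral_rnDeriv hνμ, smul_eq_mul]
    rw [key, mul_right_comm, ← ENNReal.ofReal_mul (Real.exp_pos _).le, ← Real.exp_add]
    simp
  have hpos := ae_restrict_of_ae (s := swapDom W u) (Measure.rnDeriv_pos' hμν)
  have hlt := ae_restrict_of_ae (s := swapDom W u) (Measure.rnDeriv_lt_top ν μ)
  filter_upwards [hae, hpos, hlt] with x h1 h2 h3
  rw [h1]
  exact ENNReal.mul_div_cancel_right h2.ne' h3.ne

lemma shiftZ_comp (m n : ℤ) : shiftZ (S := S) m ∘ shiftZ n = shiftZ (m + n) := by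
  ext x k
  simp [shiftZ, add_assoc]

lemma map_shiftZ_map (μ : Measure (Seq S)) (m n : ℤ) :
    Measure.map (shiftZ m) (Measure.map (shiftZ n) μ) = Measure.map (shiftZ (m + n)) μ := by
  rw [Measure.map_map (measurable_shiftZ m) (measurable_shiftZ n), shiftZ_comp]

lemma map_shiftZ_zero (μ : Measure (Seq S)) : Measure.map (shiftZ (0 : ℤ)) μ = μ := by
  have : shiftZ (S := S) 0 = id := by ext x k; simp [shiftZ]
  rw [this, Measure.map_id]

/-- Nonsingularity of the shift passes to all its powers. -/
lemma shift_equiv {μ : Measure (Seq S)} (h : ShiftNonsingular μ) (n : ℤ) :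
    Measure.map (shiftZ n) μ ≪ μ ∧ μ ≪ Measure.map (shiftZ n) μ := by
  have hnat : ∀ n : ℕ, Measure.map (shiftZ (n : ℤ)) μ ≪ μ ∧ μ ≪ Measure.map (shiftZ (n : ℤ)) μ := by
    intro n
    induction n with
    | zero => simp [map_shiftZ_zero, Measure.AbsolutelyContinuous.rfl]
    | succ n ih =>
      have e : ((n + 1 : ℕ) : ℤ) = 1 + n := by push_cast; ring
      rw [e, ← map_shiftZ_map]
      exact ⟨(ih.1.map (measurable_shiftZ 1)).trans h.1,
        h.2.trans (ih.2.map (measurable_shiftZ 1))⟩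
  rcases Int.eq_nat_or_neg n with ⟨m, rfl | rfl⟩
  · exact hnat m
  · have h1 := (hnat m).1.map (measurable_shiftZ (-(m : ℤ)))
    have h2 := (hnat m).2.map (measurable_shiftZ (-(m : ℤ)))
    rw [map_shiftZ_map, neg_add_cancel, map_shiftZ_zero] at h1 h2
    exact ⟨h2, h1⟩

/-- A swap belongs to the renormalization pseudo full-group as soon as its weight constants
relative to the shifted measures tend to `1`. -/
noncomputable def swapRenorm {μ : Measure (Seq S)} {P : ℤ → S → S → ℝ} {π : ℤ → S → ℝ}
    (hμ : HasCyl μ P π) (hns : ShiftNonsingular μ) {W : Finset ℤ} {u v : Seq S} (h : Inner W u v)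
    (hu : ∀ n, ∀ k ∈ W, 0 < P n (u k) (u (k + 1)))
    (hv : ∀ n, ∀ k ∈ W, 0 < P n (v k) (v (k + 1)))
    (hlim : Tendsto (fun n : ℤ => swapLog (fun k => P (k + -n)) W u v) cofinite (𝓝 0)) :
    RenormPFG μ where
  dom := swapDom W u
  toFun := swapMap u v
  logDeriv := fun _ => swapLog P W u v
  meas_dom := measurable_swapDom W u
  meas_toFun := measurable_swapMap u v
  meas_logDeriv := measurable_const
  injOn := fun x hx y hy hxy => by
    rw [← swapMap_swapMap h hx, ← swapMap_swapMap h hy, hxy]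
  finite_diff := by
    refine Eventually.of_forall fun x => W.finite_toSet.subset fun k hk => ?_
    refine (h k fun huv => hk ?_).1
    simp [swapMap, huv]
  deriv_spec := fun E hE hm => by
    rw [measure_swapMap_image hμ h (fun k => hu k k) (fun k => hv k k) hm hE]
    simp
  renorm := by
    have hall : ∀ᵐ x ∂μ.restrict (swapDom W u), ∀ n : ℤ,
        Measure.rnDeriv (Measure.map (shiftZ (-n)) μ) μ (swapMap u v x)
            * ENNReal.ofReal (Real.exp (swapLog P W u v))
          / Measure.rnDeriv (Measure.map (shiftZ (-n)) μ) μ x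
        = ENNReal.ofReal (Real.exp (swapLog (fun k => P (k + -n)) W u v)) :=
      ae_all_iff.2 fun n => rnDeriv_swapMap hμ (hμ.shift (-n)) (shift_equiv hns (-n)).2
        (shift_equiv hns (-n)).1 h (fun k => hu k k) (fun k => hv k k) (fun k => hu _ k)
        (fun k => hv _ k)
    filter_upwards [hall] with x hx
    simp only [hx]
    have := (ENNReal.continuous_ofReal.comp Real.continuous_exp).tendsto 0
    simp only [Function.comp_apply, Real.exp_zero, ENNReal.ofReal_one] at this
    exact this.comp hlim

end Swaps

/-! ### Lower bounds for blocks far from a window -/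

section Bounds

variable {S : Type*} [Fintype S] [MeasurableSpace S] [MeasurableSingletonClass S]

lemma HasCyl.wt_nonneg {μ : Measure (Seq S)} {P : ℤ → S → S → ℝ} {π : ℤ → S → ℝ}
    (hμ : HasCyl μ P π) (a b : ℤ) (x : Seq S) : 0 ≤ wt P π a b x :=
  mul_nonneg (hμ.pi_nonneg _ _) (Finset.prod_nonneg fun _ _ => hμ.nonneg _ _ _)

lemma HasCyl.pi_eq {μ : Measure (Seq S)} {P : ℤ → S → S → ℝ} {π : ℤ → S → ℝ}
    (hμ : HasCyl μ P π) (a : ℤ) (s : S) : μ {x | x a = s} = ENNReal.ofReal (π a s) := by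
  have := hμ.cyl_eq a a le_rfl fun _ => s
  have e : cyl a a (fun _ => s) = {x : Seq S | x a = s} := by
    ext x
    simp only [cyl, Set.mem_ofPred_eq]
    exact ⟨fun h => h a le_rfl le_rfl, fun h k h1 h2 => by rwa [le_antisymm h2 h1]⟩
  rw [e] at this
  simpa [wt] using this

lemma HasCyl.pi_le_one {μ : Measure (Seq S)} {P : ℤ → S → S → ℝ} {π : ℤ → S → ℝ}
    (hμ : HasCyl μ P π) (a : ℤ) (s : S) : π a s ≤ 1 := by
  have := hμ.prob
  have h : μ {x | x a = s} ≤ 1 := prob_le_one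
  rw [hμ.pi_eq] at h
  simpa using h

lemma prod_Ico_split (f : ℤ → ℝ) {a b c : ℤ} (hab : a ≤ b) (hbc : b ≤ c) :
    ∏ k ∈ Finset.Ico a c, f k = (∏ k ∈ Finset.Ico a b, f k) * ∏ k ∈ Finset.Ico b c, f k := by
  rw [← Finset.Ico_union_Ico_eq_Ico hab hbc,
    Finset.prod_union (Finset.Ico_disjoint_Ico_consecutive a b c)]

lemma pow_le_prod_Ico (f : ℤ → ℝ) {δ : ℝ} (h0 : 0 < δ) (h1 : δ ≤ 1) {a b : ℤ} {m : ℕ}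
    (hm : b - a ≤ m) (h : ∀ k, a ≤ k → k < b → δ ≤ f k) :
    δ ^ m ≤ ∏ k ∈ Finset.Ico a b, f k := by
  calc δ ^ m ≤ δ ^ (Finset.Ico a b).card :=
        pow_le_pow_of_le_one h0.le h1 (by rw [Int.card_Ico]; omega)
    _ = ∏ k ∈ Finset.Ico a b, δ := by simp
    _ ≤ _ := Finset.prod_le_prod (fun _ _ => h0.le) fun k hk => by
        rw [Finset.mem_Ico] at hk; exact h k hk.1 hk.2

lemma wt_congr (P : ℤ → S → S → ℝ) (π : ℤ → S → ℝ) {a b : ℤ} (hab : a ≤ b) {x y : Seq S}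
    (h : ∀ k, a ≤ k → k ≤ b → y k = x k) : wt P π a b y = wt P π a b x := by
  unfold wt
  rw [h a le_rfl hab]
  congr 1
  refine Finset.prod_congr rfl fun k hk => ?_
  rw [Finset.mem_Ico] at hk
  rw [h k hk.1 (by omega), h (k + 1) (by omega) (by omega)]

lemma measurable_block (j : ℤ) (len : ℕ) (B : ℕ → S) :
    MeasurableSet {x : Seq S | ∀ l : ℕ, l < len → x (j + l) = B l} := by
  have : {x : Seq S | ∀ l : ℕ, l < len → x (j + l) = B l} =
      ⋂ l ∈ Set.Iio len, {x : Seq S | x (j + (l : ℕ)) = B l} := by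
    ext x; simp
  rw [this]
  exact MeasurableSet.biInter (Set.to_countable _) fun l _ =>
    (measurable_pi_apply (j + (l : ℤ)) : Measurable fun y : Seq S => y (j + (l : ℤ)))
      (measurableSet_singleton (B l))

/-- A set on the window `[a, b]` meets every admissible block placed at least `M` steps to the right
in a proportion bounded below independently of the positions. -/
lemma right_block {μ : Measure (Seq S)} {P : ℤ → S → S → ℝ} {π : ℤ → S → ℝ}
    (hμ : HasCyl μ P π) {A : S → S → Bool} {δ : ℝ} (h0 : 0 < δ) (h1 : δ ≤ 1)
    (hδ : ∀ n s t, A s t = true → δ ≤ P n s t) {M : ℕ} (hM : 1 ≤ M)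
    (hprim : ∀ s t : S, ∃ u : ℕ → S,
      u 0 = s ∧ u M = t ∧ ∀ i < M, A (u i) (u (i + 1)) = true)
    {L len : ℕ} (hl : 1 ≤ len) (hL : len ≤ L) {B : ℕ → S}
    (hB : ∀ l : ℕ, l + 1 < len → A (B l) (B (l + 1)) = true)
    {a b j : ℤ} (hab : a ≤ b) (hbj : b + M ≤ j) {F : Set (Seq S)} (hF : Det a b F) :
    ENNReal.ofReal (δ ^ (M + L)) * μ F ≤
      μ (F ∩ {x | ∀ l : ℕ, l < len → x (j + l) = B l}) := by
  set G : Set (Seq S) := {x | ∀ l : ℕ, l < len → x (j + l) = B l} with hG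
  suffices h : (ENNReal.ofReal (δ ^ (M + L)) • μ) F ≤ (μ.restrict G) F from
    h.trans (Measure.restrict_apply' (measurable_block _ _ _)).le
  refine det_le (hF.mono le_rfl (by omega : b ≤ j - M)) _ _ fun x _ => ?_
  obtain ⟨p, hp0, hpM, hp⟩ := hprim (x (j - M)) (B 0)
  -- `x` up to `j - M`, then a connecting path of length `M`, then the block
  set y : Seq S := fun k => if k < j - M then x k else
    if k < j then p (k - (j - M)).toNat else B (k - j).toNat with hy
  have hyx : ∀ k, k ≤ j - M → y k = x k := by
    intro k hk
    rcases hk.lt_or_eq with h | rfl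
    · simp [hy, h]
    · have : j - (M : ℤ) < j := by omega
      simp [hy, this, hp0]
  have hyp : ∀ k, j - M ≤ k → k ≤ j → y k = p (k - (j - M)).toNat := by
    intro k hk hk'
    rcases hk'.lt_or_eq with h | rfl
    · simp [hy, h, not_lt.2 hk]
    · have e : (k - (k - (M : ℤ))).toNat = M := by omega
      have : ¬ k < k - (M : ℤ) := by omega
      simp [hy, hpM]
  have hyB : ∀ k, j ≤ k → y k = B (k - j).toNat := by
    intro k hk
    have : ¬ k < j - M := by omega
    simp [hy, this, not_lt.2 hk]
  have hadm : ∀ k, j - M ≤ k → k < j + len - 1 → δ ≤ P k (y k) (y (k + 1)) := by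
    intro k hk1 hk2
    refine hδ _ _ _ ?_
    rcases lt_or_ge k j with h | h
    · rw [hyp k hk1 h.le, hyp (k + 1) (by omega) (by omega)]
      have := hp (k - (j - M)).toNat (by omega)
      rwa [show (k - (j - M)).toNat + 1 = (k + 1 - (j - M)).toNat by omega] at this
    · rw [hyB k h, hyB (k + 1) (by omega)]
      have := hB (k - j).toNat (by omega)
      rwa [show (k - j).toNat + 1 = (k + 1 - j).toNat by omega] at this
  have hsub : cyl a (j + len - 1) y ⊆ cyl a (j - M) x ∩ G := by
    intro z hz
    refine ⟨fun k hk1 hk2 => ?_, fun l hl => ?_⟩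
    · rw [hz k hk1 (by omega), hyx k hk2]
    · rw [hz _ (by omega) (by omega), hyB _ (by omega)]
      congr 1; omega
  rw [Measure.restrict_apply (measurable_cyl _ _ _), Measure.smul_apply, smul_eq_mul]
  refine le_trans ?_ (measure_mono hsub)
  rw [hμ.cyl_eq _ _ (by omega), hμ.cyl_eq _ _ (by omega), ← ENNReal.ofReal_mul (by positivity)]
  refine ENNReal.ofReal_le_ofReal ?_
  have e : wt P π a (j + len - 1) y =
      wt P π a (j - M) y * ∏ k ∈ Finset.Ico (j - (M : ℤ)) (j + len - 1), P k (y k) (y (k + 1)) := by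
    unfold wt
    rw [prod_Ico_split _ (by omega : a ≤ j - M) (by omega)]
    ring
  rw [e, wt_congr P π (by omega) fun k _ hk => hyx k hk, mul_comm]
  exact mul_le_mul_of_nonneg_left (pow_le_prod_Ico _ h0 h1 (by push_cast; omega) hadm)
    (hμ.wt_nonneg _ _ _)

/-- Every state has probability bounded below at every time, being reachable from all states in `M`
steps. -/
lemma pi_lower {μ : Measure (Seq S)} {P : ℤ → S → S → ℝ} {π : ℤ → S → ℝ}
    (hμ : HasCyl μ P π) {A : S → S → Bool} {δ : ℝ} (h0 : 0 < δ) (h1 : δ ≤ 1)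
    (hδ : ∀ n s t, A s t = true → δ ≤ P n s t) {M : ℕ} (hM : 1 ≤ M)
    (hprim : ∀ s t : S, ∃ u : ℕ → S,
      u 0 = s ∧ u M = t ∧ ∀ i < M, A (u i) (u (i + 1)) = true)
    (n : ℤ) (s : S) : δ ^ (M + 1) ≤ π n s := by
  have := hμ.prob
  have h := right_block hμ h0 h1 hδ hM hprim (L := 1) (len := 1) le_rfl le_rfl (B := fun _ => s)
    (by simp) (a := n - M) (b := n - M) (j := n) le_rfl (by omega) (F := Set.univ)
    (fun _ _ _ => by simp)
  simp only [measure_univ, mul_one, Nat.lt_one_iff, forall_eq, Nat.cast_zero, add_zero,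
    Set.univ_inter, hμ.pi_eq] at h
  exact (ENNReal.ofReal_le_ofReal_iff (hμ.pi_nonneg n s)).1 h

/-- The mirror image of `right_block`; here the initial distributions enter. -/
lemma left_block {μ : Measure (Seq S)} {P : ℤ → S → S → ℝ} {π : ℤ → S → ℝ}
    (hμ : HasCyl μ P π) {A : S → S → Bool} {δ : ℝ} (h0 : 0 < δ) (h1 : δ ≤ 1)
    (hδ : ∀ n s t, A s t = true → δ ≤ P n s t) {M : ℕ} (hM : 1 ≤ M)
    (hprim : ∀ s t : S, ∃ u : ℕ → S,
      u 0 = s ∧ u M = t ∧ ∀ i < M, A (u i) (u (i + 1)) = true)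
    {L len : ℕ} (hl : 1 ≤ len) (hL : len ≤ L) {B : ℕ → S}
    (hB : ∀ l : ℕ, l + 1 < len → A (B l) (B (l + 1)) = true)
    {a b i : ℤ} (hab : a ≤ b) (hai : i + len - 1 + M ≤ a) {F : Set (Seq S)} (hF : Det a b F) :
    ENNReal.ofReal (δ ^ (M + 1) * δ ^ (M + L)) * μ F ≤
      μ (F ∩ {x | ∀ l : ℕ, l < len → x (i + l) = B l}) := by
  set G : Set (Seq S) := {x | ∀ l : ℕ, l < len → x (i + l) = B l} with hG
  suffices h : (ENNReal.ofReal (δ ^ (M + 1) * δ ^ (M + L)) • μ) F ≤ (μ.restrict G) F from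
    h.trans (Measure.restrict_apply' (measurable_block _ _ _)).le
  obtain ⟨q, hq⟩ : ∃ q : ℤ, q = i + len - 1 := ⟨_, rfl⟩
  refine det_le (hF.mono (by omega : q + M ≤ a) le_rfl) _ _ fun x _ => ?_
  obtain ⟨p, hp0, hpM, hp⟩ := hprim (B (len - 1)) (x (q + M))
  set y : Seq S := fun k => if k < q then B (k - i).toNat else
    if k < q + M then p (k - q).toNat else x k with hy
  have hyx : ∀ k, q + M ≤ k → y k = x k := by
    intro k hk
    have : ¬ k < q := by omega
    simp [hy, this, not_lt.2 hk]
  have hyp : ∀ k, q ≤ k → k ≤ q + M → y k = p (k - q).toNat := by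
    intro k hk hk'
    rcases hk'.lt_or_eq with h | rfl
    · simp [hy, h, not_lt.2 hk]
    · simp [hy, hpM]
  have hyB : ∀ k, k ≤ q → y k = B (k - i).toNat := by
    intro k hk
    rcases hk.lt_or_eq with h | rfl
    · simp [hy, h]
    · have e : (k - i).toNat = len - 1 := by omega
      have : k < k + M := by omega
      simp [hy, this, hp0, e]
  have hadm : ∀ k, i ≤ k → k < q + M → δ ≤ P k (y k) (y (k + 1)) := by
    intro k hk1 hk2
    refine hδ _ _ _ ?_
    rcases lt_or_ge k q with h | h
    · rw [hyB k h.le, hyB (k + 1) (by omega)]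
      have := hB (k - i).toNat (by omega)
      rwa [show (k - i).toNat + 1 = (k + 1 - i).toNat by omega] at this
    · rw [hyp k h (by omega), hyp (k + 1) (by omega) (by omega)]
      have := hp (k - q).toNat (by omega)
      rwa [show (k - q).toNat + 1 = (k + 1 - q).toNat by omega] at this
  have hsub : cyl i b y ⊆ cyl (q + M) b x ∩ G := by
    intro z hz
    refine ⟨fun k hk1 hk2 => ?_, fun l hl => ?_⟩
    · rw [hz k (by omega) hk2, hyx k hk1]
    · rw [hz _ (by omega) (by omega), hyB _ (by omega)]
      congr 1; omega
  rw [Measure.restrict_apply (measurable_cyl _ _ _), Measure.smul_apply, smul_eq_mul]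
  refine le_trans ?_ (measure_mono hsub)
  rw [hμ.cyl_eq _ _ (by omega), hμ.cyl_eq _ _ (by omega), ← ENNReal.ofReal_mul (by positivity)]
  refine ENNReal.ofReal_le_ofReal ?_
  have e : wt P π (q + M) b x = wt P π (q + M) b y :=
    (wt_congr P π (by omega) fun k hk _ => hyx k hk).symm
  have hpr : 0 ≤ ∏ k ∈ Finset.Ico (q + M) b, P k (y k) (y (k + 1)) :=
    Finset.prod_nonneg fun _ _ => hμ.nonneg _ _ _
  rw [e]
  unfold wt
  rw [prod_Ico_split _ (by omega : i ≤ q + M) (by omega), ← mul_assoc]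
  rw [← mul_assoc]
  refine mul_le_mul_of_nonneg_right ?_ hpr
  have l1 := pi_lower hμ h0 h1 hδ hM hprim i (y i)
  have l2 := pow_le_prod_Ico (fun k => P k (y k) (y (k + 1))) h0 h1
    (by push_cast; omega : q + (M : ℤ) - i ≤ ((M + L : ℕ) : ℤ)) hadm
  calc δ ^ (M + 1) * δ ^ (M + L) * π (q + M) (y (q + M))
      ≤ δ ^ (M + 1) * δ ^ (M + L) * 1 :=
        mul_le_mul_of_nonneg_left (hμ.pi_le_one _ _) (by positivity)
    _ = δ ^ (M + 1) * δ ^ (M + L) := mul_one _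
    _ ≤ _ := mul_le_mul l1 l2 (by positivity) (hμ.pi_nonneg _ _)

end Bounds

/-! ### Bessel's inequality and weak convergence to zero -/

section Bessel

lemma integrable_of_bdd {Ω : Type*} [MeasurableSpace Ω] (μ : Measure Ω) [IsFiniteMeasure μ]
    {f : Ω → ℝ} (hf : Measurable f) (C : ℝ) (h : ∀ x, |f x| ≤ C) : Integrable f μ :=
  Integrable.of_bound hf.aestronglyMeasurable C (Eventually.of_forall h)

/-- Bessel's inequality for a bounded orthogonal family. -/
lemma bessel {Ω ι : Type*} [MeasurableSpace Ω] (μ : Measure Ω) [IsProbabilityMeasure μ]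
    {Y : ι → Ω → ℝ} (hm : ∀ i, Measurable (Y i)) (hb : ∀ i x, |Y i x| ≤ 1)
    (horth : ∀ i j, i ≠ j → ∫ x, Y i x * Y j x ∂μ = 0) {g : Ω → ℝ} (hg : Measurable g) {C : ℝ}
    (hgC : ∀ x, |g x| ≤ C) (F : Finset ι) :
    ∑ i ∈ F, (∫ x, g x * Y i x ∂μ) ^ 2 ≤ ∫ x, g x ^ 2 ∂μ := by
  classical
  set a : ι → ℝ := fun i => ∫ x, g x * Y i x ∂μ with ha
  have iYY : ∀ i j, Integrable (fun x => Y i x * Y j x) μ := fun i j =>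
    integrable_of_bdd μ ((hm i).mul (hm j)) 1 fun x => by
      rw [abs_mul]; exact mul_le_one₀ (hb i x) (abs_nonneg _) (hb j x)
  have igY : ∀ i, Integrable (fun x => g x * Y i x) μ := fun i =>
    integrable_of_bdd μ (hg.mul (hm i)) (C * 1) fun x => by
      rw [abs_mul]
      exact mul_le_mul (hgC x) (hb i x) (abs_nonneg _) ((abs_nonneg _).trans (hgC x))
  have igg : Integrable (fun x => g x ^ 2) μ :=
    integrable_of_bdd μ (hg.pow_const 2) (C ^ 2) fun x => by
      rw [abs_pow]; exact pow_le_pow_left₀ (abs_nonneg _) (hgC x) 2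
  have h0 : 0 ≤ ∫ x, (g x - ∑ i ∈ F, a i * Y i x) ^ 2 ∂μ := integral_nonneg fun x => sq_nonneg _
  have e : ∀ x, (g x - ∑ i ∈ F, a i * Y i x) ^ 2 =
      g x ^ 2 - ∑ i ∈ F, 2 * a i * (g x * Y i x)
        + ∑ i ∈ F, ∑ j ∈ F, a i * a j * (Y i x * Y j x) := by
    intro x
    have : ∑ i ∈ F, ∑ j ∈ F, a i * a j * (Y i x * Y j x) = (∑ i ∈ F, a i * Y i x) ^ 2 := by
      rw [sq, Finset.sum_mul_sum]
      exact Finset.sum_congr rfl fun i _ => Finset.sum_congr rfl fun j _ => by ring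
    have h2 : ∑ i ∈ F, 2 * a i * (g x * Y i x) = 2 * g x * ∑ i ∈ F, a i * Y i x := by
      rw [Finset.mul_sum]
      exact Finset.sum_congr rfl fun i _ => by ring
    rw [this, h2]; ring
  have i1 : Integrable (fun x => ∑ i ∈ F, 2 * a i * (g x * Y i x)) μ :=
    integrable_finsetSum _ fun i _ => (igY i).const_mul _
  have i2 : Integrable (fun x => ∑ i ∈ F, ∑ j ∈ F, a i * a j * (Y i x * Y j x)) μ :=
    integrable_finsetSum _ fun i _ => integrable_finsetSum _ fun j _ => (iYY i j).const_mul _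
  simp only [e] at h0
  rw [integral_add (f := fun x => g x ^ 2 - ∑ i ∈ F, 2 * a i * (g x * Y i x)) (igg.sub i1) i2, integral_sub igg i1,
    integral_finsetSum _ fun i _ => (igY i).const_mul _,
    integral_finsetSum _ fun i _ => integrable_finsetSum _ fun j _ => (iYY i j).const_mul _] at h0
  have e1 : ∑ i ∈ F, ∫ x, 2 * a i * (g x * Y i x) ∂μ = 2 * ∑ i ∈ F, a i ^ 2 := by
    rw [Finset.mul_sum]
    refine Finset.sum_congr rfl fun i _ => ?_
    rw [integral_const_mul]
    simp only [ha]; ring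
  have e2 : ∑ i ∈ F, ∫ x, ∑ j ∈ F, a i * a j * (Y i x * Y j x) ∂μ ≤ ∑ i ∈ F, a i ^ 2 := by
    refine Finset.sum_le_sum fun i hi => ?_
    rw [integral_finsetSum _ fun j _ => (iYY i j).const_mul _]
    simp only [integral_const_mul]
    rw [Finset.sum_eq_single i (fun j _ hji => by rw [horth i j hji.symm, mul_zero])
      (fun h => absurd hi h)]
    have : ∫ x, Y i x * Y i x ∂μ ≤ 1 := by
      calc ∫ x, Y i x * Y i x ∂μ ≤ ∫ _, (1 : ℝ) ∂μ :=
            integral_mono (iYY i i) (integrable_const _) fun x => by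
              have := abs_le.1 (hb i x)
              simp only; nlinarith
        _ = 1 := by simp
    nlinarith [mul_self_nonneg (a i)]
  linarith

/-- A bounded orthogonal family converges weakly to `0`, also against absolutely continuous
measures: the density is split into a bounded part, handled by Bessel's inequality, and a part small
in `L¹`. -/
lemma weak_zero {Ω ι : Type*} [MeasurableSpace Ω] (μ : Measure Ω) [IsProbabilityMeasure μ]
    {Y : ι → Ω → ℝ} (hm : ∀ i, Measurable (Y i)) (hb : ∀ i x, |Y i x| ≤ 1)
    (horth : ∀ i j, i ≠ j → ∫ x, Y i x * Y j x ∂μ = 0) (ν : Measure Ω) [IsFiniteMeasure ν]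
    (hν : ν ≪ μ) : Tendsto (fun i => ∫ x, Y i x ∂ν) cofinite (𝓝 0) := by
  set f : Ω → ℝ := fun x => (ν.rnDeriv μ x).toReal with hf
  have hfm : Measurable f := (Measure.measurable_rnDeriv ν μ).ennreal_toReal
  have hf0 : ∀ x, 0 ≤ f x := fun x => ENNReal.toReal_nonneg
  have hfi : Integrable f μ := Measure.integrable_toReal_rnDeriv
  have hfY : ∀ i, ∫ x, Y i x ∂ν = ∫ x, f x * Y i x ∂μ := fun i =>
    (integral_rnDeriv_smul hν (f := Y i)).symm
  have htr : Tendsto (fun K : ℕ => ∫ x, f x - min (f x) K ∂μ) atTop (𝓝 0) := by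
    have : Tendsto (fun K : ℕ => ∫ x, f x - min (f x) K ∂μ) atTop (𝓝 (∫ _, (0 : ℝ) ∂μ)) := by
      refine tendsto_integral_of_dominated_convergence f
        (fun K => (hfm.sub (hfm.min measurable_const)).aestronglyMeasurable) hfi
        (fun K => Eventually.of_forall fun x => ?_) (Eventually.of_forall fun x => ?_)
      · have h1 : 0 ≤ min (f x) K := le_min (hf0 x) (Nat.cast_nonneg K)
        have h2 : min (f x) K ≤ f x := min_le_left _ _
        rw [Real.norm_eq_abs, abs_le]
        constructor <;> linarith [hf0 x]
      · refine tendsto_const_nhds.congr' ?_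
        obtain ⟨K₀, hK₀⟩ := exists_nat_ge (f x)
        filter_upwards [eventually_ge_atTop K₀] with K hK
        rw [min_eq_left (hK₀.trans (by exact_mod_cast hK)), sub_self]
    simpa using this
  rw [Metric.tendsto_nhds]
  intro ε hε
  obtain ⟨K, hK⟩ := ((tendsto_order.1 htr).2 (ε / 2) (by positivity)).exists
  set g : Ω → ℝ := fun x => min (f x) K with hg
  have hgm : Measurable g := hfm.min measurable_const
  have hgC : ∀ x, |g x| ≤ K := fun x => by
    rw [abs_of_nonneg (le_min (hf0 x) (Nat.cast_nonneg K))]; exact min_le_right _ _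
  have hsum : Summable fun i => (∫ x, g x * Y i x ∂μ) ^ 2 :=
    summable_of_sum_le (fun i => sq_nonneg _) fun F => bessel μ hm hb horth hgm hgC F
  have hlim := hsum.tendsto_cofinite_zero
  filter_upwards [(tendsto_order.1 hlim).2 ((ε / 2) ^ 2) (by positivity)] with i hi
  have hi' := abs_lt_of_sq_lt_sq hi (by positivity)
  have igY : Integrable (fun x => g x * Y i x) μ :=
    integrable_of_bdd μ (hgm.mul (hm i)) (K * 1) fun x => by
      rw [abs_mul]
      exact mul_le_mul (hgC x) (hb i x) (abs_nonneg _) ((abs_nonneg _).trans (hgC x))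
  have ifY : Integrable (fun x => f x * Y i x) μ :=
    hfi.mul_bdd (hm i).aestronglyMeasurable (Eventually.of_forall (hb i))
  have hdiff : |∫ x, f x * Y i x ∂μ - ∫ x, g x * Y i x ∂μ| ≤ ∫ x, f x - g x ∂μ := by
    rw [← integral_sub ifY igY, ← Real.norm_eq_abs]
    refine norm_integral_le_of_norm_le (hfi.sub ?_) (Eventually.of_forall fun x => ?_)
    · exact integrable_of_bdd μ hgm K hgC
    · have h2 : 0 ≤ f x - g x := sub_nonneg.2 (min_le_left _ _)
      rw [Real.norm_eq_abs, ← sub_mul, abs_mul, abs_of_nonneg h2]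
      exact mul_le_of_le_one_right h2 (hb i x)
  rw [Real.dist_eq, sub_zero, hfY]
  have := abs_le.1 hdiff
  have h3 := abs_lt.1 hi'
  rw [abs_lt]
  constructor <;> linarith [this.1, this.2, h3.1, h3.2]

end Bessel

/-! ### Asymptotic equality of consecutive transition matrices -/

section Drift

variable {S : Type*} [Fintype S] [MeasurableSpace S] [MeasurableSingletonClass S]

/-- Conditionally on an event of the past up to time `m` and on `x m = s`, the next state is `t` with
probability `P m s t`. -/
lemma markov_property {μ : Measure (Seq S)} {P : ℤ → S → S → ℝ} {π : ℤ → S → ℝ}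
    (hμ : HasCyl μ P π) {a m : ℤ} (ham : a ≤ m) {G : Set (Seq S)} (hG : Det a m G) (s t : S) :
    μ.real (G ∩ {x | x m = s ∧ x (m + 1) = t}) = P m s t * μ.real (G ∩ {x | x m = s}) := by
  have hF : Det a m (G ∩ {x | x m = s}) := by
    intro x y hxy
    simp only [Set.mem_inter_iff, Set.mem_ofPred_eq, hG x y hxy, hxy m ham le_rfl]
  have ht : MeasurableSet {x : Seq S | x (m + 1) = t} :=
    (measurable_pi_apply (m + 1) : Measurable fun x : Seq S => x (m + 1))
      (measurableSet_singleton t)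
  have hcyl : ∀ x ∈ G ∩ {x | x m = s}, (μ.restrict {x | x (m + 1) = t}) (cyl a m x) =
      (ENNReal.ofReal (P m s t) • μ) (cyl a m x) := by
    rintro x ⟨-, hx : x m = s⟩
    have e : cyl a m x ∩ {x | x (m + 1) = t} = cyl a (m + 1) (Function.update x (m + 1) t) := by
      ext z
      simp only [cyl, Set.mem_inter_iff, Set.mem_ofPred_eq]
      constructor
      · rintro ⟨h1, h2⟩ k hk1 hk2
        rcases hk2.lt_or_eq with h | rfl
        · rw [Function.update_of_ne h.ne, h1 k hk1 (by omega)]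
        · rw [h2, Function.update_self]
      · intro h
        refine ⟨fun k hk1 hk2 => ?_, ?_⟩
        · have hne : k ≠ m + 1 := by omega
          rw [h k hk1 (by omega), Function.update_of_ne hne]
        · rw [h (m + 1) (by omega) le_rfl, Function.update_self]
    have hne : m ≠ m + 1 := by omega
    have e2 : wt P π a (m + 1) (Function.update x (m + 1) t) = P m s t * wt P π a m x := by
      have : wt P π a (m + 1) (Function.update x (m + 1) t) =
          wt P π a m (Function.update x (m + 1) t) * P m s t := by
        unfold wt
        rw [prod_Ico_split _ ham (by omega : m ≤ m + 1)]
        have : Finset.Ico m (m + 1) = {m} := by ext k; simp; omega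
        rw [this, Finset.prod_singleton, Function.update_self, Function.update_of_ne hne, hx]
        ring
      rw [this, wt_congr P π ham fun k _ hk => Function.update_of_ne (by omega) t x, mul_comm]
    rw [Measure.restrict_apply (measurable_cyl _ _ _), e, hμ.cyl_eq _ _ (by omega), e2,
      ENNReal.ofReal_mul (hμ.nonneg _ _ _), Measure.smul_apply, hμ.cyl_eq _ _ ham, smul_eq_mul]
  have h := le_antisymm (det_le hF _ _ fun x hx => (hcyl x hx).le)
    (det_le hF _ _ fun x hx => (hcyl x hx).ge)
  rw [Measure.restrict_apply' ht, Measure.smul_apply, smul_eq_mul] at h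
  have e3 : G ∩ {x | x m = s} ∩ {x | x (m + 1) = t} = G ∩ {x | x m = s ∧ x (m + 1) = t} := by
    ext x; simp [and_assoc]
  rw [e3] at h
  rw [measureReal_def, h, ENNReal.toReal_mul, ENNReal.toReal_ofReal (hμ.nonneg _ _ _),
    measureReal_def]

/-- The compensated indicator of the transition `s → t` at time `n`. -/
noncomputable def comp (P : ℤ → S → S → ℝ) (s t : S) (n : ℤ) (x : Seq S) : ℝ :=
  {x : Seq S | x n = s ∧ x (n + 1) = t}.indicator 1 x
    - P n s t * {x : Seq S | x n = s}.indicator 1 x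

lemma measurableSet_one (s : S) (n : ℤ) : MeasurableSet {x : Seq S | x n = s} :=
  (measurable_pi_apply n : Measurable fun x : Seq S => x n) (measurableSet_singleton s)

lemma measurableSet_two (s t : S) (n : ℤ) :
    MeasurableSet {x : Seq S | x n = s ∧ x (n + 1) = t} :=
  (measurableSet_one s n).inter (measurableSet_one t (n + 1))

lemma measurable_comp (P : ℤ → S → S → ℝ) (s t : S) (n : ℤ) : Measurable (comp P s t n) :=
  (measurable_one.indicator (measurableSet_two s t n)).sub
    ((measurable_one.indicator (measurableSet_one s n)).const_mul _)

lemma comp_bdd {P : ℤ → S → S → ℝ} {s t : S} {n : ℤ} (h0 : 0 ≤ P n s t) (h1 : P n s t ≤ 1)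
    (x : Seq S) : |comp P s t n x| ≤ 1 := by
  unfold comp
  by_cases hs : x n = s <;> by_cases ht : x (n + 1) = t <;>
    simp [Set.indicator, hs, ht, abs_le] <;> constructor <;> linarith

lemma integral_indicator_comp (μ : Measure (Seq S)) [IsFiniteMeasure μ] (P : ℤ → S → S → ℝ)
    (s t : S) (m : ℤ) {G : Set (Seq S)} (hG : MeasurableSet G) :
    ∫ x, G.indicator 1 x * comp P s t m x ∂μ =
      μ.real (G ∩ {x | x m = s ∧ x (m + 1) = t}) - P m s t * μ.real (G ∩ {x | x m = s}) := by
  have e : ∀ x, G.indicator 1 x * comp P s t m x =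
      (G ∩ {x | x m = s ∧ x (m + 1) = t}).indicator 1 x
        - P m s t * (G ∩ {x | x m = s}).indicator 1 x := by
    intro x
    simp only [comp, Set.inter_indicator_one, Pi.mul_apply]
    ring
  have m1 := hG.inter (measurableSet_two s t m)
  have m2 := hG.inter (measurableSet_one s m)
  have hi : ∀ {T : Set (Seq S)}, MeasurableSet T →
      Integrable (T.indicator (1 : Seq S → ℝ)) μ :=
    fun hT => (integrable_const (1 : ℝ)).indicator hT
  simp only [e]
  rw [integral_sub (hi m1) ((hi m2).const_mul _), integral_const_mul, integral_indicator_one m1,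
    integral_indicator_one m2]

/-- Compensated indicators at different times are orthogonal: by the Markov property the later one
has mean `0` on every event of its past. -/
lemma comp_orth {μ : Measure (Seq S)} {P : ℤ → S → S → ℝ} {π : ℤ → S → ℝ}
    (hμ : HasCyl μ P π) (hP : ∀ n s t, P n s t ≤ 1) (s t : S) (n m : ℤ) (hnm : n ≠ m) :
    ∫ x, comp P s t n x * comp P s t m x ∂μ = 0 := by
  have := hμ.prob
  wlog h : n < m generalizing n m
  · have := this m n hnm.symm (by omega)
    simpa only [mul_comm] using this
  have hd1 : Det n m {x : Seq S | x n = s ∧ x (n + 1) = t} := by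
    intro x y hxy
    simp only [Set.mem_ofPred_eq, hxy n le_rfl h.le, hxy (n + 1) (by omega) (by omega)]
  have hd2 : Det n m {x : Seq S | x n = s} := by
    intro x y hxy
    simp only [Set.mem_ofPred_eq, hxy n le_rfl h.le]
  have e : ∀ x, comp P s t n x * comp P s t m x =
      {x : Seq S | x n = s ∧ x (n + 1) = t}.indicator 1 x * comp P s t m x
        - P n s t * ({x : Seq S | x n = s}.indicator 1 x * comp P s t m x) := by
    intro x
    rw [comp]
    ring
  have hi : ∀ {T : Set (Seq S)}, MeasurableSet T →
      Integrable (fun x => T.indicator 1 x * comp P s t m x) μ := fun {T} hT =>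
    integrable_of_bdd μ ((measurable_one.indicator hT).mul (measurable_comp P s t m)) 1 fun x => by
      have := comp_bdd (hμ.nonneg m s t) (hP m s t) x
      by_cases hx : x ∈ T <;> simp [hx, this]
  simp only [e]
  rw [integral_sub (hi (measurableSet_two s t n)) ((hi (measurableSet_one s n)).const_mul _),
    integral_const_mul, integral_indicator_comp μ P s t m (measurableSet_two s t n),
    integral_indicator_comp μ P s t m (measurableSet_one s n), markov_property hμ h.le hd1,
    markov_property hμ h.le hd2]
  ring

/-- Nonsingularity of the shift forces consecutive transition matrices to be asymptotically equal:
the compensated indicators are orthogonal in `L²(μ)`, hence their means under the absolutely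
continuous shifted measure tend to `0`, and these means are
`π (n + 1) s * (P (n + 1) s t - P n s t)`. -/
lemma drift_tendsto {μ : Measure (Seq S)} {P : ℤ → S → S → ℝ} {π : ℤ → S → ℝ}
    (hμ : HasCyl μ P π) (hP : ∀ n s t, P n s t ≤ 1) (hns : ShiftNonsingular μ)
    {A : S → S → Bool} {δ : ℝ} (h0 : 0 < δ) (h1 : δ ≤ 1)
    (hδ : ∀ n s t, A s t = true → δ ≤ P n s t) {M : ℕ} (hM : 1 ≤ M)
    (hprim : ∀ s t : S, ∃ u : ℕ → S,
      u 0 = s ∧ u M = t ∧ ∀ i < M, A (u i) (u (i + 1)) = true) (s t : S) :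
    Tendsto (fun n : ℤ => P (n + 1) s t - P n s t) cofinite (𝓝 0) := by
  have := hμ.prob
  have hν := hμ.shift 1
  have := hν.prob
  have hw := weak_zero μ (measurable_comp P s t)
    (fun n x => comp_bdd (hμ.nonneg n s t) (hP n s t) x)
    (comp_orth hμ hP s t) (Measure.map (shiftZ 1) μ) hns.1
  have e : ∀ n, ∫ x, comp P s t n x ∂(Measure.map (shiftZ 1) μ) =
      π (n + 1) s * (P (n + 1) s t - P n s t) := by
    intro n
    have h2 := integral_indicator_comp (Measure.map (shiftZ 1) μ) P s t n MeasurableSet.univ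
    rw [markov_property hν (le_refl n) (fun _ _ _ => by simp)] at h2
    simp only [Set.indicator_univ, Pi.one_apply, one_mul, Set.univ_inter] at h2
    rw [h2, measureReal_def, hν.pi_eq, ENNReal.toReal_ofReal (hμ.pi_nonneg _ _)]
    ring
  simp only [e] at hw
  have hc : 0 < δ ^ (M + 1) := by positivity
  refine squeeze_zero_norm (fun n => ?_)
    (by simpa using (hw.norm.const_mul (δ ^ (M + 1))⁻¹))
  rw [Real.norm_eq_abs, abs_of_nonneg (hμ.pi_nonneg (n + 1) s), ← mul_assoc]
  refine le_mul_of_one_le_left (abs_nonneg _) ?_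
  rw [inv_mul_eq_div, one_le_div hc]
  exact pi_lower hμ h0 h1 hδ hM hprim (n + 1) s

/-- Logarithms of the transition probabilities at two fixed offsets are asymptotically equal. -/
lemma log_tendsto {P : ℤ → S → S → ℝ} {δ : ℝ} (h0 : 0 < δ) {s t : S} (hδ : ∀ n, δ ≤ P n s t)
    (hdr : Tendsto (fun n : ℤ => P (n + 1) s t - P n s t) cofinite (𝓝 0)) (i j : ℤ) :
    Tendsto (fun n : ℤ => Real.log (P (i + -n) s t) - Real.log (P (j + -n) s t))
      cofinite (𝓝 0) := by
  have hstep : Tendsto (fun n : ℤ => Real.log (P (n + 1) s t) - Real.log (P n s t))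
      cofinite (𝓝 0) := by
    refine squeeze_zero_norm (fun n => ?_) (by simpa using hdr.norm.const_mul δ⁻¹)
    have key : ∀ x y : ℝ, δ ≤ x → δ ≤ y → Real.log x - Real.log y ≤ δ⁻¹ * |x - y| := by
      intro x y hx hy
      have hx0 := h0.trans_le hx
      have hy0 := h0.trans_le hy
      rw [← Real.log_div hx0.ne' hy0.ne']
      calc Real.log (x / y) ≤ x / y - 1 := Real.log_le_sub_one_of_pos (by positivity)
        _ = y⁻¹ * (x - y) := by field_simp
        _ ≤ y⁻¹ * |x - y| := mul_le_mul_of_nonneg_left (le_abs_self _) (by positivity)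
        _ ≤ δ⁻¹ * |x - y| := mul_le_mul_of_nonneg_right (inv_anti₀ h0 hy) (abs_nonneg _)
    rw [Real.norm_eq_abs, abs_le]
    constructor
    · have := key _ _ (hδ n) (hδ (n + 1))
      rw [abs_sub_comm] at this
      linarith
    · exact key _ _ (hδ (n + 1)) (hδ n)
  have hnat : ∀ (m : ℕ) (j : ℤ), Tendsto
      (fun n : ℤ => Real.log (P (j + m + -n) s t) - Real.log (P (j + -n) s t)) cofinite (𝓝 0) := by
    intro m j
    induction m with
    | zero => simp
    | succ m ih =>
      have hinj : Function.Injective fun n : ℤ => j + m + -n := fun a b h => by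
        simp only at h; omega
      have h2 := (hstep.comp hinj.tendsto_cofinite).add ih
      rw [add_zero] at h2
      refine h2.congr fun n => ?_
      simp only [Function.comp_apply]
      rw [show j + (m : ℤ) + -n + 1 = j + ((m + 1 : ℕ) : ℤ) + -n by push_cast; ring]
      ring
  rcases le_total j i with h | h
  · have := hnat (i - j).toNat j
    rwa [show j + ((i - j).toNat : ℤ) = i by omega] at this
  · have := (hnat (j - i).toNat i).neg
    rw [show i + ((j - i).toNat : ℤ) = j by omega, neg_zero] at this
    exact this.congr fun n => by ring

end Drift

/-! ### Values of far swaps -/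

section Values

variable {S : Type*} [Fintype S] [MeasurableSpace S] [MeasurableSingletonClass S]

/-- The data `W, u, v` define a swap of admissible words which changes no coordinate of the window
`[-N, N]` and belongs to the renormalization pseudo full-group. -/
structure FarSwap (A : S → S → Bool) (P : ℤ → S → S → ℝ) (N : ℕ) (W : Finset ℤ) (u v : Seq S) :
    Prop where
  far : ∀ k ∈ W, (N : ℤ) < k ∨ k + 1 < -(N : ℤ)
  inner : Inner W u v
  adm_left : ∀ k ∈ W, A (u k) (u (k + 1)) = true
  adm_right : ∀ k ∈ W, A (v k) (v (k + 1)) = true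
  lim : Tendsto (fun n : ℤ => swapLog (fun k => P (k + -n)) W u v) cofinite (𝓝 0)

/-- `r` is approximated by the logarithmic derivatives of arbitrarily far swaps whose domains meet
every window set in a proportion bounded below, uniformly in the window. -/
def FarValue (μ : Measure (Seq S)) (A : S → S → Bool) (P : ℤ → S → S → ℝ) (r : ℝ) : Prop :=
  ∀ ε : ℝ, 0 < ε → ∃ c : ℝ, 0 < c ∧ ∀ N : ℕ, ∃ (W : Finset ℤ) (u v : Seq S),
    FarSwap A P N W u v ∧ |swapLog P W u v - r| < ε ∧
    ∀ F, MeasurableSet F → Det (-(N : ℤ)) N F →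
      ENNReal.ofReal c * μ F ≤ μ (F ∩ swapDom W u)

lemma FarSwap.symm {A : S → S → Bool} {P : ℤ → S → S → ℝ} {N : ℕ} {W : Finset ℤ} {u v : Seq S}
    (h : FarSwap A P N W u v) : FarSwap A P N W v u where
  far := h.far
  inner := h.inner.symm
  adm_left := h.adm_right
  adm_right := h.adm_left
  lim := by
    have := h.lim.neg
    simp only [neg_zero] at this
    exact this.congr fun n => (swapLog_symm _ W u v).symm

lemma FarSwap.mem_iff {A : S → S → Bool} {P : ℤ → S → S → ℝ} {N : ℕ} {W : Finset ℤ} {u v : Seq S}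
    (h : FarSwap A P N W u v) {F : Set (Seq S)} (hF : Det (-(N : ℤ)) N F) (x : Seq S) :
    swapMap u v x ∈ F ↔ x ∈ F := by
  refine hF _ _ fun k h1 h2 => ?_
  by_cases hk : u k = v k
  · simp [swapMap, hk]
  · have e1 := h.far k (h.inner k hk).1
    omega

lemma farValue_zero {μ : Measure (Seq S)} [IsProbabilityMeasure μ] (A : S → S → Bool)
    (P : ℤ → S → S → ℝ) : FarValue μ A P 0 := by
  intro ε hε
  obtain ⟨u⟩ := nonempty_of_isProbabilityMeasure μ
  refine ⟨1, one_pos, fun N => ⟨∅, u, u, ⟨by simp, fun k hk => absurd rfl hk, by simp, by simp,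
    by simp [swapLog]⟩, by simpa [swapLog] using hε, fun F _ _ => by simp [swapDom]⟩⟩

lemma farValue_neg {μ : Measure (Seq S)} {A : S → S → Bool} {P : ℤ → S → S → ℝ} {π : ℤ → S → ℝ}
    (hμ : HasCyl μ P π) (hA : ∀ n s t, A s t = true → 0 < P n s t) {r : ℝ}
    (hr : FarValue μ A P r) : FarValue μ A P (-r) := by
  intro ε hε
  obtain ⟨c, hc, h⟩ := hr ε hε
  refine ⟨Real.exp (r - ε) * c, by positivity, fun N => ?_⟩
  obtain ⟨W, u, v, hs, hD, hF⟩ := h N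
  refine ⟨W, v, u, hs.symm, ?_, fun F hFm hFd => ?_⟩
  · rw [swapLog_symm, ← neg_sub', abs_neg]
    exact hD
  · have e : F ∩ swapDom W v = swapMap v u ⁻¹' F ∩ swapDom W v := by
      ext x
      simp only [Set.mem_inter_iff, Set.mem_preimage, hs.symm.mem_iff hFd]
    rw [e, measure_swapMap_preimage hμ hs.inner.symm (fun k hk => hA k _ _ (hs.adm_right k hk))
      (fun k hk => hA k _ _ (hs.adm_left k hk)) hFm, swapLog_symm, neg_neg,
      ENNReal.ofReal_mul (Real.exp_pos _).le, mul_assoc]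
    refine mul_le_mul' (ENNReal.ofReal_le_ofReal (Real.exp_le_exp.2 ?_)) (hF F hFm hFd)
    have := (abs_lt.1 hD).1
    linarith

/-- Two swaps, the second of which is far beyond the edges of the first, combine into one. -/
lemma exists_combine (W₁ W₂ : Finset ℤ) (u₁ u₂ v₁ v₂ : Seq S)
    (hfar : ∀ k ∈ W₂, ∀ l ∈ W₁, l + 1 < k ∨ k + 1 < l) :
    ∃ u v : Seq S, (∀ k ∈ W₁, u k = u₁ k ∧ u (k + 1) = u₁ (k + 1)) ∧
      (∀ k ∈ W₂, u k = u₂ k ∧ u (k + 1) = u₂ (k + 1)) ∧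
      (∀ k ∈ W₁, v k = v₁ k ∧ v (k + 1) = v₁ (k + 1)) ∧
      (∀ k ∈ W₂, v k = v₂ k ∧ v (k + 1) = v₂ (k + 1)) ∧
      ∀ k, u k ≠ v k → u₁ k ≠ v₁ k ∨ u₂ k ≠ v₂ k := by
  classical
  have h2 : ∀ k ∈ W₂, ¬ (k ∈ W₁ ∨ k - 1 ∈ W₁) ∧ ¬ (k + 1 ∈ W₁ ∨ k + 1 - 1 ∈ W₁) := by
    refine fun k hk => ⟨?_, ?_⟩ <;> rintro (h | h) <;> have := hfar k hk _ h <;> omega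
  refine ⟨fun k => if k ∈ W₁ ∨ k - 1 ∈ W₁ then u₁ k else u₂ k,
    fun k => if k ∈ W₁ ∨ k - 1 ∈ W₁ then v₁ k else v₂ k, ?_, ?_, ?_, ?_, ?_⟩
  · intro k hk; simp [hk]
  · intro k hk; simp only [if_neg (h2 k hk).1, if_neg (h2 k hk).2, and_self]
  · intro k hk; simp [hk]
  · intro k hk; simp only [if_neg (h2 k hk).1, if_neg (h2 k hk).2, and_self]
  · intro k hk
    by_cases h : k ∈ W₁ ∨ k - 1 ∈ W₁
    · left; simpa only [if_pos h] using hk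
    · right; simpa only [if_neg h] using hk

lemma farValue_add {μ : Measure (Seq S)} {A : S → S → Bool} {P : ℤ → S → S → ℝ} {r₁ r₂ : ℝ}
    (h₁ : FarValue μ A P r₁) (h₂ : FarValue μ A P r₂) : FarValue μ A P (r₁ + r₂) := by
  classical
  intro ε hε
  obtain ⟨c₁, hc₁, h₁⟩ := h₁ (ε / 2) (half_pos hε)
  obtain ⟨c₂, hc₂, h₂⟩ := h₂ (ε / 2) (half_pos hε)
  refine ⟨c₂ * c₁, by positivity, fun N => ?_⟩
  obtain ⟨W₁, u₁, v₁, hs₁, hD₁, hF₁⟩ := h₁ N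
  obtain ⟨N₂, hN₂, hW₁⟩ : ∃ N₂ : ℕ, N ≤ N₂ ∧ ∀ k ∈ W₁, k.natAbs + 2 ≤ N₂ := by
    refine ⟨N + ∑ k ∈ W₁, k.natAbs + 2, by omega, fun k hk => ?_⟩
    have h1 : k.natAbs ≤ ∑ k ∈ W₁, k.natAbs :=
      Finset.single_le_sum (f := fun k : ℤ => k.natAbs) (fun _ _ => Nat.zero_le _) hk
    omega
  obtain ⟨W₂, u₂, v₂, hs₂, hD₂, hF₂⟩ := h₂ N₂
  have hfar : ∀ k ∈ W₂, ∀ l ∈ W₁, l + 1 < k ∨ k + 1 < l := by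
    intro k hk l hl
    have h1 := hW₁ l hl
    have h2 := hs₂.far k hk
    omega
  have hdisj : Disjoint W₁ W₂ := by
    rw [Finset.disjoint_left]
    intro k h1 h2
    have := hfar k h2 k h1
    omega
  obtain ⟨u, v, hu₁, hu₂, hv₁, hv₂, huv⟩ := exists_combine W₁ W₂ u₁ u₂ v₁ v₂ hfar
  have hlog : ∀ Q : ℤ → S → S → ℝ,
      swapLog Q W₁ u₁ v₁ + swapLog Q W₂ u₂ v₂ = swapLog Q (W₁ ∪ W₂) u v := by
    intro Q
    rw [swapLog, swapLog, swapLog, Finset.sum_union hdisj]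
    congr 1
    · refine Finset.sum_congr rfl fun k hk => ?_
      rw [(hu₁ k hk).1, (hu₁ k hk).2, (hv₁ k hk).1, (hv₁ k hk).2]
    · refine Finset.sum_congr rfl fun k hk => ?_
      rw [(hu₂ k hk).1, (hu₂ k hk).2, (hv₂ k hk).1, (hv₂ k hk).2]
  have hdom : swapDom (W₁ ∪ W₂) u = swapDom W₁ u₁ ∩ swapDom W₂ u₂ := by
    ext x
    simp only [swapDom, Set.mem_ofPred_eq, Set.mem_inter_iff, Finset.mem_union]
    constructor
    · refine fun h => ⟨fun k hk => ?_, fun k hk => ?_⟩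
      · rw [← (hu₁ k hk).1, ← (hu₁ k hk).2]; exact h k (Or.inl hk)
      · rw [← (hu₂ k hk).1, ← (hu₂ k hk).2]; exact h k (Or.inr hk)
    · rintro ⟨h1, h2⟩ k (hk | hk)
      · rw [(hu₁ k hk).1, (hu₁ k hk).2]; exact h1 k hk
      · rw [(hu₂ k hk).1, (hu₂ k hk).2]; exact h2 k hk
  refine ⟨W₁ ∪ W₂, u, v, ⟨?_, ?_, ?_, ?_, ?_⟩, ?_, fun F hFm hFd => ?_⟩
  · intro k hk
    rcases Finset.mem_union.1 hk with hk | hk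
    · exact hs₁.far k hk
    · have := hs₂.far k hk
      omega
  · intro k hk
    rcases huv k hk with h | h
    · exact ⟨Finset.mem_union_left _ (hs₁.inner k h).1, Finset.mem_union_left _ (hs₁.inner k h).2⟩
    · exact ⟨Finset.mem_union_right _ (hs₂.inner k h).1, Finset.mem_union_right _ (hs₂.inner k h).2⟩
  · intro k hk
    rcases Finset.mem_union.1 hk with hk | hk
    · rw [(hu₁ k hk).1, (hu₁ k hk).2]; exact hs₁.adm_left k hk
    · rw [(hu₂ k hk).1, (hu₂ k hk).2]; exact hs₂.adm_left k hk
  · intro k hk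
    rcases Finset.mem_union.1 hk with hk | hk
    · rw [(hv₁ k hk).1, (hv₁ k hk).2]; exact hs₁.adm_right k hk
    · rw [(hv₂ k hk).1, (hv₂ k hk).2]; exact hs₂.adm_right k hk
  · have := hs₁.lim.add hs₂.lim
    rw [add_zero] at this
    exact this.congr fun n => hlog _
  · rw [← hlog]
    rw [abs_lt] at hD₁ hD₂ ⊢
    constructor <;> linarith
  · have hd : Det (-(N₂ : ℤ)) N₂ (F ∩ swapDom W₁ u₁) := by
      intro x y hxy
      refine and_congr (hFd.mono (by omega) (by omega) x y hxy) ?_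
      refine forall₂_congr fun k hk => ?_
      have := hW₁ k hk
      rw [hxy k (by omega) (by omega), hxy (k + 1) (by omega) (by omega)]
    rw [hdom, ← Set.inter_assoc, ENNReal.ofReal_mul hc₂.le, mul_assoc]
    exact (mul_le_mul_right (hF₁ F hFm hFd) _).trans
      (hF₂ _ (hFm.inter (measurable_swapDom _ _)) hd)

/-- The density argument: a set of positive measure is close to a window set `F`, and a far swap
maps a fixed proportion of `F` into `F`, hence most of it from `E` into `E`. -/
lemma FarValue.essential {μ : Measure (Seq S)} {A : S → S → Bool} {P : ℤ → S → S → ℝ}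
    {π : ℤ → S → ℝ} (hμ : HasCyl μ P π) (hns : ShiftNonsingular μ)
    (hA : ∀ n s t, A s t = true → 0 < P n s t) {r : ℝ} (hr : FarValue μ A P r) :
    IsEssentialValueRenorm μ r := by
  have := hμ.prob
  intro E hE hpos ε hε
  obtain ⟨c, hc, h⟩ := hr ε hε
  have hm : 0 < μ.real E := ENNReal.toReal_pos hpos.ne' (measure_ne_top _ _)
  set K : ℝ := Real.exp (ε - r) with hK
  have hK0 : 0 < K := Real.exp_pos _
  -- small enough for the approximation errors not to exhaust the proportion `c`
  obtain ⟨η, hη, hη'⟩ : ∃ η : ℝ, 0 < η ∧ η * (c + 1 + K) < c * μ.real E := by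
    refine ⟨c * μ.real E / (2 * (c + 1 + K)), by positivity, ?_⟩
    have : c * μ.real E / (2 * (c + 1 + K)) * (c + 1 + K) = c * μ.real E / 2 := by
      field_simp
    rw [this]
    exact half_lt_self (by positivity)
  obtain ⟨N, F, hFd, hFm, hEF⟩ := exists_det_approx μ hE hη
  obtain ⟨W, u, v, hs, hD, hF⟩ := h N
  refine ⟨swapRenorm hμ hns hs.inner (fun n k hk => hA n _ _ (hs.adm_left k hk))
    (fun n k hk => hA n _ _ (hs.adm_right k hk)) hs.lim, ?_⟩
  have huniv : {x : Seq S | |(swapRenorm hμ hns hs.inner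
      (fun n k hk => hA n _ _ (hs.adm_left k hk))
      (fun n k hk => hA n _ _ (hs.adm_right k hk)) hs.lim).logDeriv x - r| < ε} = Set.univ :=
    Set.eq_univ_of_forall fun x => hD
  rw [huniv, Set.inter_univ]
  change 0 < μ (E ∩ swapDom W u ∩ swapMap u v ⁻¹' E)
  have hsd : μ.real (symmDiff E F) < η := by
    rw [measureReal_def]
    exact (ENNReal.lt_ofReal_iff_toReal_lt (measure_ne_top _ _)).1 hEF
  have h1 : μ.real (F \ E) ≤ μ.real (symmDiff E F) :=
    measureReal_mono (fun x hx => Or.inr hx)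
  have h2 : μ.real E ≤ μ.real F + μ.real (symmDiff E F) :=
    (measureReal_mono (fun x hx => by
      by_cases hxF : x ∈ F
      · exact Or.inl hxF
      · exact Or.inr (Or.inl ⟨hx, hxF⟩))).trans (measureReal_union_le _ _)
  have h3 : c * μ.real F ≤ μ.real (F ∩ swapDom W u) := by
    have := ENNReal.toReal_mono (measure_ne_top _ _) (hF F hFm hFd)
    rwa [ENNReal.toReal_mul, ENNReal.toReal_ofReal hc.le] at this
  have h4 : μ.real (swapMap u v ⁻¹' (F \ E) ∩ swapDom W u) ≤ K * μ.real (F \ E) := by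
    rw [measureReal_def, measure_swapMap_preimage hμ hs.inner
      (fun k hk => hA k _ _ (hs.adm_left k hk)) (fun k hk => hA k _ _ (hs.adm_right k hk))
      (hFm.diff hE), ENNReal.toReal_mul, ENNReal.toReal_ofReal (Real.exp_pos _).le]
    refine mul_le_mul (Real.exp_le_exp.2 ?_) (measureReal_mono Set.inter_subset_left)
      ENNReal.toReal_nonneg hK0.le
    have := (abs_lt.1 hD).1
    linarith
  have h5 : F ∩ swapDom W u ⊆ (E ∩ swapDom W u ∩ swapMap u v ⁻¹' E) ∪
      ((F \ E) ∪ (swapMap u v ⁻¹' (F \ E) ∩ swapDom W u)) := by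
    rintro x ⟨hxF, hxd⟩
    by_cases hxE : x ∈ E
    · by_cases hvE : swapMap u v x ∈ E
      · exact Or.inl ⟨⟨hxE, hxd⟩, hvE⟩
      · exact Or.inr (Or.inr ⟨⟨(hs.mem_iff hFd x).2 hxF, hvE⟩, hxd⟩)
    · exact Or.inr (Or.inl ⟨hxF, hxE⟩)
  have h6 := (measureReal_mono (μ := μ) h5).trans (measureReal_union_le _ _)
  have h7 := measureReal_union_le (μ := μ) (F \ E) (swapMap u v ⁻¹' (F \ E) ∩ swapDom W u)
  have h8 : 0 < μ.real (E ∩ swapDom W u ∩ swapMap u v ⁻¹' E) := by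
    have e1 : c * μ.real E ≤ c * μ.real F + c * η := by
      rw [← mul_add]; exact mul_le_mul_of_nonneg_left (by linarith) hc.le
    have e2 : K * μ.real (F \ E) ≤ K * η := mul_le_mul_of_nonneg_left (by linarith) hK0.le
    nlinarith
  exact (ENNReal.toReal_pos_iff.1 h8).1

/-- The values `FarValue` form a subgroup of `ℝ`. -/
def farSubgroup {μ : Measure (Seq S)} {A : S → S → Bool} {P : ℤ → S → S → ℝ} {π : ℤ → S → ℝ}
    (hμ : HasCyl μ P π) (hA : ∀ n s t, A s t = true → 0 < P n s t) : AddSubgroup ℝ where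
  carrier := {r | FarValue μ A P r}
  zero_mem' := by have := hμ.prob; exact farValue_zero A P
  add_mem' := farValue_add
  neg_mem' := farValue_neg hμ hA

lemma farValue_of_dense {μ : Measure (Seq S)} {A : S → S → Bool} {P : ℤ → S → S → ℝ}
    {π : ℤ → S → ℝ} (hμ : HasCyl μ P π) (hA : ∀ n s t, A s t = true → 0 < P n s t)
    (hd : Dense (farSubgroup hμ hA : Set ℝ)) (r : ℝ) : FarValue μ A P r := by
  intro ε hε
  obtain ⟨q, hq, hqr⟩ := hd.exists_dist_lt r (half_pos hε)
  obtain ⟨c, hc, h⟩ := (show FarValue μ A P q from hq) (ε / 2) (half_pos hε)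
  refine ⟨c, hc, fun N => ?_⟩
  obtain ⟨W, u, v, hs, hD, hF⟩ := h N
  refine ⟨W, u, v, hs, ?_, hF⟩
  rw [Real.dist_eq, abs_lt] at hqr
  rw [abs_lt] at hD ⊢
  constructor <;> linarith

end Values

/-! ### Exchanging the blocks of an admissible configuration -/

section Config

variable {S : Type*} [Fintype S] [MeasurableSpace S] [MeasurableSingletonClass S]

/-- A sequence carrying the block `B` at `i` and the block `B'` at `j`, and the constant filler
`s` elsewhere. -/
def twoBlock (s : S) (i j : ℤ) (len : ℕ) (B B' : ℕ → S) : Seq S := fun k =>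
  if i ≤ k ∧ k < i + len then B (k - i).toNat
  else if j ≤ k ∧ k < j + len then B' (k - j).toNat else s

/-- The edges inside the blocks of length `len` at `i` and `j`. -/
noncomputable def twoEdges (i j : ℤ) (len : ℕ) : Finset ℤ :=
  Finset.Ico i (i + len - 1) ∪ Finset.Ico j (j + len - 1)

lemma twoBlock_left (s : S) (i j : ℤ) {len : ℕ} (B B' : ℕ → S) {l : ℕ} (hl : l < len) :
    twoBlock s i j len B B' (i + l) = B l := by
  rw [twoBlock, if_pos (by omega)]
  congr 1
  omega

lemma twoBlock_right (s : S) {i j : ℤ} {len : ℕ} (hij : i + len ≤ j) (B B' : ℕ → S) {l : ℕ}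
    (hl : l < len) : twoBlock s i j len B B' (j + l) = B' l := by
  rw [twoBlock, if_neg (by omega), if_pos (by omega)]
  congr 1
  omega

lemma sum_Ico_block (f : ℤ → ℝ) (i : ℤ) {len : ℕ} (hl : 1 ≤ len) :
    ∑ k ∈ Finset.Ico i (i + len - 1), f k = ∑ l ∈ Finset.range (len - 1), f (i + l) := by
  symm
  refine Finset.sum_bij (fun l _ => i + (l : ℤ)) ?_ ?_ ?_ ?_
  · intro l hl'
    rw [Finset.mem_range] at hl'
    rw [Finset.mem_Ico]
    omega
  · intro a _ b _ h
    omega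
  · intro k hk
    rw [Finset.mem_Ico] at hk
    exact ⟨(k - i).toNat, by rw [Finset.mem_range]; omega, by omega⟩
  · intros; rfl

lemma twoBlock_swapLog (P : ℤ → S → S → ℝ) (s : S) {i j : ℤ} {len : ℕ} (hl : 1 ≤ len)
    (hij : i + len ≤ j) (B B' : ℕ → S) :
    swapLog P (twoEdges i j len) (twoBlock s i j len B B') (twoBlock s i j len B' B) =
      ∑ l ∈ Finset.range (len - 1),
        ((Real.log (P (i + l) (B' l) (B' (l + 1))) - Real.log (P (j + l) (B' l) (B' (l + 1)))) -
         (Real.log (P (i + l) (B l) (B (l + 1))) - Real.log (P (j + l) (B l) (B (l + 1))))) := by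
  have hdisj : Disjoint (Finset.Ico i (i + len - 1)) (Finset.Ico j (j + len - 1)) := by
    rw [Finset.disjoint_left]
    intro k h1 h2
    rw [Finset.mem_Ico] at h1 h2
    omega
  rw [swapLog, twoEdges, Finset.sum_union hdisj, sum_Ico_block _ i hl, sum_Ico_block _ j hl,
    ← Finset.sum_add_distrib]
  refine Finset.sum_congr rfl fun l hl' => ?_
  rw [Finset.mem_range] at hl'
  have e : ∀ a : ℤ, a + (l : ℤ) + 1 = a + ((l + 1 : ℕ) : ℤ) := fun a => by push_cast; ring
  rw [e, e, twoBlock_left _ _ _ _ _ (by omega), twoBlock_left _ _ _ _ _ (by omega),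
    twoBlock_left _ _ _ _ _ (by omega), twoBlock_left _ _ _ _ _ (by omega),
    twoBlock_right _ hij _ _ (by omega), twoBlock_right _ hij _ _ (by omega),
    twoBlock_right _ hij _ _ (by omega), twoBlock_right _ hij _ _ (by omega)]
  ring

lemma twoBlock_adm {A : S → S → Bool} (s : S) {i j : ℤ} {len : ℕ} (hij : i + len ≤ j)
    {B B' : ℕ → S} (hB : ∀ l : ℕ, l + 1 < len → A (B l) (B (l + 1)) = true)
    (hB' : ∀ l : ℕ, l + 1 < len → A (B' l) (B' (l + 1)) = true) :
    ∀ k ∈ twoEdges i j len,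
      A (twoBlock s i j len B B' k) (twoBlock s i j len B B' (k + 1)) = true := by
  intro k hk
  have e : ∀ (a : ℤ) (l : ℕ), a + (l : ℤ) + 1 = a + ((l + 1 : ℕ) : ℤ) :=
    fun a l => by push_cast; ring
  rcases Finset.mem_union.1 hk with hk | hk <;> rw [Finset.mem_Ico] at hk
  · obtain ⟨l, rfl⟩ : ∃ l : ℕ, k = i + l := ⟨(k - i).toNat, by omega⟩
    rw [e, twoBlock_left _ _ _ _ _ (by omega), twoBlock_left _ _ _ _ _ (by omega)]
    exact hB l (by omega)
  · obtain ⟨l, rfl⟩ : ∃ l : ℕ, k = j + l := ⟨(k - j).toNat, by omega⟩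
    rw [e, twoBlock_right _ hij _ _ (by omega), twoBlock_right _ hij _ _ (by omega)]
    exact hB' l (by omega)

lemma twoBlock_inner (s : S) {i j : ℤ} {len : ℕ} {B B' : ℕ → S}
    (hfirst : B 0 = B' 0) (hlast : B (len - 1) = B' (len - 1)) :
    Inner (twoEdges i j len) (twoBlock s i j len B B') (twoBlock s i j len B' B) := by
  have key : ∀ l : ℕ, l < len → B l ≠ B' l → 1 ≤ l ∧ l + 1 < len := by
    intro l h1 h2
    have h3 : l ≠ 0 := by rintro rfl; exact h2 hfirst
    have h4 : l ≠ len - 1 := by rintro rfl; exact h2 hlast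
    omega
  intro k hk
  simp only [twoEdges, Finset.mem_union, Finset.mem_Ico]
  unfold twoBlock at hk
  split_ifs at hk with h1 h2
  · have := key _ (by omega) hk
    omega
  · have := key _ (by omega) hk.symm
    omega
  · exact absurd rfl hk

lemma log_wordP {A : S → S → Bool} {P : ℤ → S → S → ℝ} (hA : ∀ n s t, A s t = true → 0 < P n s t)
    {B : ℕ → S} {len : ℕ} (hB : ∀ l : ℕ, l + 1 < len → A (B l) (B (l + 1)) = true) (i : ℤ) :
    wordP P i B len ≠ 0 ∧ Real.log (wordP P i B len) =
      ∑ l ∈ Finset.range (len - 1), Real.log (P (i + l) (B l) (B (l + 1))) := by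
  have h : ∀ l ∈ Finset.range (len - 1), P (i + l) (B l) (B (l + 1)) ≠ 0 := by
    intro l hl
    rw [Finset.mem_range] at hl
    exact (hA _ _ _ (hB l (by omega))).ne'
  exact ⟨Finset.prod_ne_zero_iff.2 h, Real.log_prod h⟩

/-- Exchanging the words of an admissible pair placed at `i` and `j`, far from the window. The
shifted logarithmic derivatives tend to `0` because consecutive transition matrices are
asymptotically equal. -/
lemma twoBlock_farSwap {A : S → S → Bool} {P : ℤ → S → S → ℝ} {δ : ℝ} (h0 : 0 < δ)
    (hδ : ∀ n s t, A s t = true → δ ≤ P n s t)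
    (hdr : ∀ s t, Tendsto (fun n : ℤ => P (n + 1) s t - P n s t) cofinite (𝓝 0))
    (s : S) {i j : ℤ} {len : ℕ} (hl : 1 ≤ len) {B B' : ℕ → S}
    (hB : ∀ l : ℕ, l + 1 < len → A (B l) (B (l + 1)) = true)
    (hB' : ∀ l : ℕ, l + 1 < len → A (B' l) (B' (l + 1)) = true)
    (hfirst : B 0 = B' 0) (hlast : B (len - 1) = B' (len - 1))
    {N : ℕ} (hi : i + len < -(N : ℤ)) (hj : (N : ℤ) < j) :
    FarSwap A P N (twoEdges i j len) (twoBlock s i j len B B') (twoBlock s i j len B' B) where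
  far k hk := by
    rcases Finset.mem_union.1 hk with hk | hk <;> rw [Finset.mem_Ico] at hk <;> omega
  inner := twoBlock_inner s hfirst hlast
  adm_left := twoBlock_adm s (by omega) hB hB'
  adm_right := twoBlock_adm s (by omega) hB' hB
  lim := by
    simp only [twoBlock_swapLog _ s hl (show i + len ≤ j by omega)]
    have := tendsto_finsetSum (Finset.range (len - 1)) (f := fun (l : ℕ) (n : ℤ) =>
      (Real.log (P (i + l + -n) (B' l) (B' (l + 1))) -
        Real.log (P (j + l + -n) (B' l) (B' (l + 1)))) -
      (Real.log (P (i + l + -n) (B l) (B (l + 1))) -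
        Real.log (P (j + l + -n) (B l) (B (l + 1))))) (a := fun _ => 0) (x := cofinite) ?_
    · simpa using this
    · intro l hl'
      rw [Finset.mem_range] at hl'
      have h1 := log_tendsto h0 (fun n => hδ n _ _ (hB' l (by omega))) (hdr _ _) (i + l) (j + l)
      have h2 := log_tendsto h0 (fun n => hδ n _ _ (hB l (by omega))) (hdr _ _) (i + l) (j + l)
      simpa using h1.sub h2

/-- The domain of the exchange takes a fixed proportion of every set on the window. -/
lemma twoBlock_dom {μ : Measure (Seq S)} {P : ℤ → S → S → ℝ} {π : ℤ → S → ℝ}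
    (hμ : HasCyl μ P π) {A : S → S → Bool} {δ : ℝ} (h0 : 0 < δ) (h1 : δ ≤ 1)
    (hδ : ∀ n s t, A s t = true → δ ≤ P n s t) {M : ℕ} (hM : 1 ≤ M)
    (hprim : ∀ s t : S, ∃ u : ℕ → S,
      u 0 = s ∧ u M = t ∧ ∀ i < M, A (u i) (u (i + 1)) = true)
    (s : S) {i j : ℤ} {L len : ℕ} (hl : 1 ≤ len) (hL : len ≤ L) {B B' : ℕ → S}
    (hB : ∀ l : ℕ, l + 1 < len → A (B l) (B (l + 1)) = true)
    (hB' : ∀ l : ℕ, l + 1 < len → A (B' l) (B' (l + 1)) = true)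
    {N : ℕ} (hi : i + len + M < -(N : ℤ)) (hj : (N : ℤ) + M < j) {F : Set (Seq S)}
    (hF : Det (-(N : ℤ)) N F) :
    ENNReal.ofReal (δ ^ (M + 1) * δ ^ (M + L) * δ ^ (M + L)) * μ F ≤
      μ (F ∩ swapDom (twoEdges i j len) (twoBlock s i j len B B')) := by
  have hr := right_block hμ h0 h1 hδ hM hprim hl hL hB' (a := -(N : ℤ)) (b := N) (j := j)
    (by omega) (by omega) hF
  have hd : Det (-(N : ℤ)) (j + len) (F ∩ {x | ∀ l : ℕ, l < len → x (j + l) = B' l}) := by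
    intro x y hxy
    refine and_congr (hF.mono le_rfl (by omega) x y hxy) ?_
    refine forall₂_congr fun l hl' => ?_
    rw [hxy (j + l) (by omega) (by omega)]
  have hlft := left_block hμ h0 h1 hδ hM hprim hl hL hB (i := i) (by omega) (by omega) hd
  rw [ENNReal.ofReal_mul (by positivity), mul_assoc]
  refine ((mul_le_mul_right hr _).trans hlft).trans (measure_mono ?_)
  rintro x ⟨⟨hxF, hxj⟩, hxi⟩
  refine ⟨hxF, fun k hk => ?_⟩
  have e : ∀ (a : ℤ) (l : ℕ), a + (l : ℤ) + 1 = a + ((l + 1 : ℕ) : ℤ) :=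
    fun a l => by push_cast; ring
  have hij : i + len ≤ j := by omega
  rcases Finset.mem_union.1 hk with hk | hk <;> rw [Finset.mem_Ico] at hk
  · obtain ⟨l, rfl⟩ : ∃ l : ℕ, k = i + l := ⟨(k - i).toNat, by omega⟩
    rw [e, twoBlock_left _ _ _ _ _ (by omega), twoBlock_left _ _ _ _ _ (by omega)]
    exact ⟨hxi l (by omega), hxi (l + 1) (by omega)⟩
  · obtain ⟨l, rfl⟩ : ∃ l : ℕ, k = j + l := ⟨(k - j).toNat, by omega⟩
    rw [e, twoBlock_right _ hij _ _ (by omega), twoBlock_right _ hij _ _ (by omega)]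
    exact ⟨hxj l (by omega), hxj (l + 1) (by omega)⟩

lemma dense_of_interval_or_linearIndependent {G : AddSubgroup ℝ}
    (h : (∃ a b : ℝ, a < b ∧ Set.Icc a b ⊆ G) ∨
      ∃ r₁ r₂ : ℝ, r₁ ∈ G ∧ r₂ ∈ G ∧ LinearIndependent ℚ ![r₁, r₂]) : Dense (G : Set ℝ) := by
  rcases AddSubgroup.dense_or_cyclic G with hd | ⟨g, rfl⟩
  · exact hd
  exfalso
  rcases h with ⟨a, b, hab, h⟩ | ⟨r₁, r₂, h1, h2, h⟩
  · have hc : (Set.range fun n : ℤ => n • g).Countable := Set.countable_range _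
    have hI : (Set.Icc a b).Countable :=
      hc.mono fun x hx => AddSubgroup.mem_closure_singleton.1 (h hx)
    rw [← Cardinal.le_aleph0_iff_set_countable, Cardinal.mk_Icc_real hab] at hI
    exact Cardinal.aleph0_lt_continuum.not_ge hI
  · obtain ⟨m, rfl⟩ := AddSubgroup.mem_closure_singleton.1 h1
    obtain ⟨n, rfl⟩ := AddSubgroup.mem_closure_singleton.1 h2
    have hp := LinearIndependent.pair_iff.1 h
    have h3 := hp n (-m) (by
      simp only [Rat.smul_def, zsmul_eq_mul]; push_cast; ring)
    have hm : m = 0 := by simpa using h3.2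
    have := hp 1 0 (by simp [hm])
    exact one_ne_zero this.1

end Config

/-- **Partial limits of admissible configurations are essential values.**
For a topologically mixing (with `A^M > 0`) Markov SFT with the Doeblin condition
and nonsingular shift, for every admissible configuration `(B_k(i_k), B'_k(j_k))`
with `D_k = log(P_{i_k}(B'_k) P_{j_k}(B_k) / (P_{i_k}(B_k) P_{j_k}(B'_k)))`, the
set `𝓛(D_k)` of partial limits of `(D_k)` is contained in the ratio set
`e(𝓡_A)`; in particular, if `𝓛(D_k)` contains an interval of positive length, or
two numbers linearly independent over `ℚ`, then `e(𝓡_A) = ℝ`. -/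
theorem partial_limits_subset_ratioSet_renorm
    {S : Type*} [Fintype S] [MeasurableSpace S] [MeasurableSingletonClass S]
    (A : S → S → Bool)
    (P : ℤ → S → S → ℝ) (π : ℤ → S → ℝ) (μ : Measure (Seq S))
    (hμ : IsMarkovMeasure μ A P π) (hD : Doeblin A P)
    (hns : ShiftNonsingular μ)
    (M : ℕ) (hM : 1 ≤ M)
    (hprim : ∀ s t : S, ∃ u : ℕ → S,
      u 0 = s ∧ u M = t ∧ ∀ i < M, A (u i) (u (i + 1)) = true)
    -- the admissible configuration
    (L : ℕ) (hL : 1 ≤ L)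
    (Bk B'k : ℕ → ℕ → S) (len : ℕ → ℕ)
    (hlen : ∀ k, 1 ≤ len k ∧ len k ≤ L)
    (hBadm : ∀ k, ∀ l : ℕ, l + 1 < len k → A (Bk k l) (Bk k (l + 1)) = true)
    (hB'adm : ∀ k, ∀ l : ℕ, l + 1 < len k → A (B'k k l) (B'k k (l + 1)) = true)
    (hfirst : ∀ k, Bk k 0 = B'k k 0)
    (hlast : ∀ k, Bk k (len k - 1) = B'k k (len k - 1))
    (hne : ∀ k, ∃ l < len k, Bk k l ≠ B'k k l)
    (jj : ℕ → ℤ) (hjpos : ∀ k, 1 ≤ jj k)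
    (hjgap : ∀ k, (L : ℤ) + (M : ℤ) ≤ jj (k + 1) - jj k)
    (ii : ℕ → ℤ) (hineg : ∀ k, ii k ≤ -1)
    (higap : ∀ k, (L : ℤ) + (M : ℤ) ≤ ii k - ii (k + 1))
    -- the sequence D
    (D : ℕ → ℝ)
    (hDdef : ∀ k, D k = Real.log
      (wordP P (ii k) (B'k k) (len k) * wordP P (jj k) (Bk k) (len k) /
        (wordP P (ii k) (Bk k) (len k) * wordP P (jj k) (B'k k) (len k)))) :
    (∀ r : ℝ, r ∈ limitSet D → IsEssentialValueRenorm μ r) ∧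
    (((∃ a b : ℝ, a < b ∧ Set.Icc a b ⊆ limitSet D) ∨
        (∃ r₁ r₂ : ℝ, r₁ ∈ limitSet D ∧ r₂ ∈ limitSet D ∧
          LinearIndependent ℚ ![r₁, r₂])) →
      ∀ r : ℝ, IsEssentialValueRenorm μ r) := by
  have hC := HasCyl.of_markov hμ
  have hP1 : ∀ n s t, P n s t ≤ 1 := fun n s t => by
    rw [← (hμ.stochastic n).2 s]
    exact Finset.single_le_sum (fun t _ => (hμ.stochastic n).1 s t) (Finset.mem_univ t)
  obtain ⟨δ', hδ'0, hδ'⟩ := hD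
  obtain ⟨δ, h0, h1, hδ⟩ : ∃ δ : ℝ, 0 < δ ∧ δ ≤ 1 ∧ ∀ n s t, A s t = true → δ ≤ P n s t :=
    ⟨min δ' 1, by positivity, min_le_right _ _,
      fun n s t h => (min_le_left _ _).trans ((hδ' n s t).2 h)⟩
  have hA : ∀ n s t, A s t = true → 0 < P n s t := fun n s t h => h0.trans_le (hδ n s t h)
  have hdr := drift_tendsto hC hP1 hns h0 h1 hδ hM hprim
  have hj : ∀ k : ℕ, (k : ℤ) ≤ jj k := by
    intro k
    induction k with
    | zero => have := hjpos 0; push_cast; omega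
    | succ k ih => have := hjgap k; push_cast; omega
  have hi : ∀ k : ℕ, ii k ≤ -(k : ℤ) := by
    intro k
    induction k with
    | zero => have := hineg 0; push_cast; omega
    | succ k ih => have := higap k; push_cast; omega
  have hfar : ∀ r ∈ limitSet D, FarValue μ A P r := by
    rintro r ⟨φ, hφ, hlim⟩ ε hε
    refine ⟨δ ^ (M + 1) * δ ^ (M + L) * δ ^ (M + L), by positivity, fun N => ?_⟩
    obtain ⟨m, hm1, hm2⟩ := ((Metric.tendsto_nhds.1 hlim ε hε).and
      (eventually_ge_atTop (N + M + L + 1))).exists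
    set k := φ m with hk
    have hkm : N + M + L + 1 ≤ k := hm2.trans (hφ.id_le m)
    have hjk := hj k
    have hik := hi k
    obtain ⟨hl1, hl2⟩ := hlen k
    refine ⟨twoEdges (ii k) (jj k) (len k), twoBlock (Bk k 0) (ii k) (jj k) (len k) (Bk k) (B'k k),
      twoBlock (Bk k 0) (ii k) (jj k) (len k) (B'k k) (Bk k),
      twoBlock_farSwap h0 hδ hdr _ hl1 (hBadm k) (hB'adm k) (hfirst k) (hlast k)
        (by omega) (by omega), ?_,
      fun F _ hF => twoBlock_dom hC h0 h1 hδ hM hprim _ hl1 hl2 (hBadm k) (hB'adm k)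
        (by omega) (by omega) hF⟩
    rw [Real.dist_eq, Function.comp_apply, ← hk, hDdef] at hm1
    obtain ⟨a1, b1⟩ := log_wordP hA (hBadm k) (ii k)
    obtain ⟨a2, b2⟩ := log_wordP hA (hBadm k) (jj k)
    obtain ⟨a3, b3⟩ := log_wordP hA (hB'adm k) (ii k)
    obtain ⟨a4, b4⟩ := log_wordP hA (hB'adm k) (jj k)
    rw [Real.log_div (mul_ne_zero a3 a2) (mul_ne_zero a1 a4), Real.log_mul a3 a2,
      Real.log_mul a1 a4, b1, b2, b3, b4] at hm1
    rw [twoBlock_swapLog _ _ hl1 (by omega)]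
    simp only [Finset.sum_sub_distrib]
    convert hm1 using 2
    ring
  refine ⟨fun r hr => (hfar r hr).essential hC hns hA, fun h r => ?_⟩
  refine (farValue_of_dense hC hA (dense_of_interval_or_linearIndependent ?_) r).essential hC hns hA
  rcases h with ⟨a, b, hab, h⟩ | ⟨r₁, r₂, hr₁, hr₂, h⟩
  · exact Or.inl ⟨a, b, hab, fun x hx => hfar x (h hx)⟩
  · exact Or.inr ⟨r₁, r₂, hfar r₁ hr₁, hfar r₂ hr₂, h⟩

end MarkovSFT
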